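/- Let s ∈ (0,1), u ∈ C_c^∞(ℝⁿ), and let U be its Caffarelli–Silvestre extension. Assume ∫₀^∞∫_{ℝⁿ} z^{1−2s} ( |∇_x² U(x,z)|² + |∇_x ∂_z U(x,z)|² ) dx dz < ∞. Then for every x ∈ ℝⁿ, ½ Λ^s( |∇u|² )(x) − ∇u(x) · ∇( Λ^s u )(x) = β_s ∫₀^∞ ( P_z^{(s)} ∗ ( |∇_x² U(·,z)|² + |∇_x ∂_z U(·,z)|² ) )(x) z^{1−2s} dz, where |∇u|² ∈ C_c^∞(ℝⁿ) is the squared Euclidean norm of the gradient and |∇_x² U|² is the squared Frobenius norm of the Hessian in the x-variables. -/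

import Mathlib

open MeasureTheory Filter Set
open scoped Topology ENNReal NNReal

noncomputable section

/-- `ℝⁿ` with the Euclidean norm. -/
abbrev En (n : ℕ) := EuclideanSpace ℝ (Fin n)

/-- The normalizing constant `p(n,s) = Γ(n/2+s)/(π^{n/2} Γ(s))` of the Poisson kernel. -/
def pns (n : ℕ) (s : ℝ) : ℝ :=
  Real.Gamma ((n : ℝ) / 2 + s) / (Real.pi ^ ((n : ℝ) / 2) * Real.Gamma s)

/-- The fractional Poisson kernel `P_z^{(s)}(x) = p(n,s) z^{2s} (|x|² + z²)^{-(n+2s)/2}`. -/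
def Pker (n : ℕ) (s z : ℝ) (x : En n) : ℝ :=
  pns n s * z ^ (2 * s) * (‖x‖ ^ 2 + z ^ 2) ^ (-((n : ℝ) + 2 * s) / 2)

/-- Convolution with the fractional Poisson kernel in the first variable, at fixed `z`. -/
def Pconv (n : ℕ) (s z : ℝ) (f : En n → ℝ) (x : En n) : ℝ :=
  ∫ y, Pker n s z (x - y) * f y

/-- The Caffarelli–Silvestre extension `U(x,z) = (P_z^{(s)} ∗ u)(x)`. -/
def CSext (n : ℕ) (s : ℝ) (u : En n → ℝ) (x : En n) (z : ℝ) : ℝ :=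
  Pconv n s z u x

/-- The constant `C(n,s) = 4^s Γ(n/2+s) / (π^{n/2} |Γ(-s)|)`. -/
def Cns (n : ℕ) (s : ℝ) : ℝ :=
  4 ^ s * Real.Gamma ((n : ℝ) / 2 + s) / (Real.pi ^ ((n : ℝ) / 2) * |Real.Gamma (-s)|)

/-- The fractional Laplacian `(-Δ)^s w(x)` as a principal-value singular integral. -/
def fracLap (n : ℕ) (s : ℝ) (w : En n → ℝ) (x : En n) : ℝ :=
  Cns n s * limUnder (𝓝[>] (0 : ℝ))
    (fun ε : ℝ => ∫ y in {y : En n | ε < ‖x - y‖}, (w x - w y) / ‖x - y‖ ^ ((n : ℝ) + 2 * s))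

/-- `Λ^s w := -(-Δ)^s w`. -/
def Lam (n : ℕ) (s : ℝ) (w : En n → ℝ) (x : En n) : ℝ := - fracLap n s w x

/-- The first-order carré du champ `Γ₁(u,v) = ½(Λ^s(uv) - u Λ^s v - v Λ^s u)`. -/
def Gamma1 (n : ℕ) (s : ℝ) (u v : En n → ℝ) (x : En n) : ℝ :=
  (Lam n s (fun y => u y * v y) x - u x * Lam n s v x - v x * Lam n s u x) / 2

/-- The constant `β_s = 2^{2s-1} Γ(s)/Γ(1-s)`. -/
def betaS (s : ℝ) : ℝ := 2 ^ (2 * s - 1) * Real.Gamma s / Real.Gamma (1 - s)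

/-- Partial derivative in the `i`-th coordinate direction. -/
def pd {n : ℕ} (i : Fin n) (f : En n → ℝ) (x : En n) : ℝ :=
  fderiv ℝ f x (EuclideanSpace.single i 1)

/-- The Laplacian in the `x`-variables. -/
def lapX {n : ℕ} (f : En n → ℝ) (x : En n) : ℝ := ∑ i, pd i (pd i f) x

/-- The degenerate operator `L_s W = div_{x,z}(z^{1-2s} ∇̃W)`, written out as
`z^{1-2s} Δ_x W + ∂_z(z^{1-2s} ∂_z W)`. -/
def LsOp {n : ℕ} (s : ℝ) (W : En n → ℝ → ℝ) (x : En n) (z : ℝ) : ℝ :=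
  z ^ (1 - 2 * s) * lapX (fun y => W y z) x
    + deriv (fun t => t ^ (1 - 2 * s) * deriv (W x) t) z

/-!
For `v = ∂ⱼu` with extension `V` and a point `x`, the Poisson kernel `P = P_z(x - ·)` and `V`
solve the same degenerate equation `z^{1-2s} Δ_x W + ∂_z (z^{1-2s} ∂_z W) = 0`. Green's identity
applied to `P` and `(V - v(x))²` therefore produces only the energy term `2 z^{1-2s} P |∇̃V|²`.
Integrated over the half space, the contribution of `z = ∞` vanishes and the one of `z = 0` comes
from the flux `z^{1-2s} ∂_z P → 2s p(n,s) |x - y|^{-(n+2s)}`: it is the jump energy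
`∫ (v(y) - v(x))² |x - y|^{-(n+2s)} dy`, which is a multiple of the carré du champ of `Λ^s`,
`½ (Λ^s(v²) - 2 v Λ^s v)`. Since `Λ^s` and the extension commute with `∂ⱼ`, summing over `j` gives
Bochner's formula.
-/

open Asymptotics

section PoissonKernel

variable {n : ℕ} {s z : ℝ}

section Subordination

variable {V : Type*} [NormedAddCommGroup V] [InnerProductSpace ℝ V] [FiniteDimensional ℝ V]
  [MeasurableSpace V] [BorelSpace V]

lemma integral_rpow_mul_exp_neg_one_add_norm_sq_mul {t : ℝ} (ht : 0 < t) (a : ℝ) :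
    ∫ v : V, t ^ a * Real.exp (-((1 + ‖v‖ ^ 2) * t)) =
      Real.pi ^ ((Module.finrank ℝ V : ℝ) / 2)
        * (Real.exp (-t) * t ^ (a - (Module.finrank ℝ V : ℝ) / 2)) := by
  have hexp (v : V) : t ^ a * Real.exp (-((1 + ‖v‖ ^ 2) * t))
      = t ^ a * Real.exp (-t) * Real.exp (-t * ‖v‖ ^ 2) := by
    rw [mul_assoc, ← Real.exp_add]
    exact congrArg (t ^ a * Real.exp ·) (by ring)
  simp_rw [hexp]
  rw [integral_const_mul, GaussianFourier.integral_rexp_neg_mul_sq_norm ht,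
    Real.div_rpow Real.pi_pos.le ht.le, Real.rpow_sub ht]
  ring

-- Subordination: `(1 + |v|²)^{-b}` is a superposition of Gaussians.
lemma integral_one_add_norm_sq_rpow_neg (hs : 0 < s) :
    ∫ v : V, (1 + ‖v‖ ^ 2) ^ (-((Module.finrank ℝ V : ℝ) / 2 + s)) =
      Real.pi ^ ((Module.finrank ℝ V : ℝ) / 2) * Real.Gamma s
        / Real.Gamma ((Module.finrank ℝ V : ℝ) / 2 + s) := by
  set b := (Module.finrank ℝ V : ℝ) / 2 + s with hb
  have hb₀ : 0 < b := by positivity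
  let G : V → ℝ → ℝ := fun v t => t ^ (b - 1) * Real.exp (-((1 + ‖v‖ ^ 2) * t))
  have integral_G (v : V) : ∫ t in Ioi 0, G v t = (1 + ‖v‖ ^ 2) ^ (-b) * Real.Gamma b := by
    rw [Real.integral_rpow_mul_exp_neg_mul_Ioi hb₀ (by positivity), one_div,
      Real.inv_rpow (by positivity), Real.rpow_neg (by positivity)]
  have integrable_G : Integrable (Function.uncurry G) (volume.prod (volume.restrict (Ioi 0))) := by
    have hmeas : Measurable (Function.uncurry G) := by
      unfold Function.uncurry G
      fun_prop
    refine (integrable_prod_iff hmeas.aestronglyMeasurable).2 ⟨Eventually.of_forall fun v => ?_, ?_⟩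
    · refine Integrable.of_integral_ne_zero (μ := volume.restrict (Ioi 0)) (f := G v) ?_
      rw [integral_G]
      positivity
    · have hnorm (v : V) : ∫ t in Ioi 0, ‖G v t‖ = (1 + ‖v‖ ^ 2) ^ (-b) * Real.Gamma b := by
        rw [← integral_G]
        refine setIntegral_congr_fun measurableSet_Ioi fun t (ht : 0 < t) => ?_
        exact Real.norm_of_nonneg (by positivity)
      have hint := integrable_rpow_neg_one_add_norm_sq (E := V) (μ := volume) (r := 2 * b)
        (by linarith)
      simpa only [Function.uncurry, hnorm, neg_mul, mul_div_cancel_left₀ b two_ne_zero, neg_div]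
        using hint.mul_const (Real.Gamma b)
  have hswap := integral_integral_swap integrable_G
  simp_rw [integral_G] at hswap
  rw [integral_mul_const, setIntegral_congr_fun measurableSet_Ioi fun t ht =>
    integral_rpow_mul_exp_neg_one_add_norm_sq_mul ht (b - 1), integral_const_mul,
    show b - 1 - (Module.finrank ℝ V : ℝ) / 2 = s - 1 by rw [hb]; ring,
    ← Real.Gamma_eq_integral hs] at hswap
  rw [← hswap]
  field_simp

end Subordination

lemma pns_pos (hs : 0 < s) : 0 < pns n s := by
  have := Real.Gamma_pos_of_pos hs
  have := Real.Gamma_pos_of_pos (show 0 < (n : ℝ) / 2 + s by positivity)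
  unfold pns
  positivity

lemma Pker_pos (hs : 0 < s) (hz : 0 < z) (w : En n) : 0 < Pker n s z w := by
  have := pns_pos (n := n) hs
  unfold Pker
  positivity

lemma continuous_Pker (hz : 0 < z) : Continuous (Pker n s z) := by
  unfold Pker
  exact continuous_const.mul
    (Continuous.rpow_const (by fun_prop) fun w => Or.inl (by positivity))

lemma Pker_smul_mul_norm_rpow (hz : 0 < z) (α : ℝ) (w : En n) :
    Pker n s z (z • w) * ‖z • w‖ ^ α = z ^ (α - n) * (Pker n s 1 w * ‖w‖ ^ α) := by
  have hρ : ‖z • w‖ ^ 2 + z ^ 2 = z ^ 2 * (‖w‖ ^ 2 + 1 ^ 2) := by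
    rw [norm_smul, Real.norm_of_nonneg hz.le]; ring
  have hexp : z ^ (2 * s) * (z ^ 2) ^ (-((n : ℝ) + 2 * s) / 2) * z ^ α = z ^ (α - n) := by
    rw [← Real.rpow_natCast_mul hz.le, ← Real.rpow_add hz, ← Real.rpow_add hz]
    congr 1; push_cast; ring
  unfold Pker
  rw [hρ, norm_smul, Real.norm_of_nonneg hz.le, Real.mul_rpow hz.le (norm_nonneg w),
    Real.mul_rpow (by positivity) (by positivity), ← hexp, Real.one_rpow]
  ring

lemma integrable_Pker_one_mul_norm_rpow {α : ℝ} (hs : 0 < s) (hα₀ : 0 ≤ α) (hα : α < 2 * s) :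
    Integrable fun w : En n => Pker n s 1 w * ‖w‖ ^ α := by
  have hint := (integrable_rpow_neg_one_add_norm_sq (E := En n) (μ := volume)
    (r := n + 2 * s - α) (by simp; linarith)).const_mul (pns n s)
  have hcont : Continuous fun w : En n => Pker n s 1 w * ‖w‖ ^ α :=
    (continuous_Pker one_pos).mul (continuous_norm.rpow_const fun _ => Or.inr hα₀)
  refine hint.mono' hcont.aestronglyMeasurable (Eventually.of_forall fun w => ?_)
  have hρ : 0 < 1 + ‖w‖ ^ 2 := by positivity
  have hnorm : ‖w‖ ^ α ≤ (1 + ‖w‖ ^ 2) ^ (α / 2) := by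
    calc ‖w‖ ^ α = (‖w‖ ^ 2) ^ (α / 2) := by
          rw [← Real.rpow_natCast_mul (norm_nonneg w)]; congr 1; push_cast; ring
      _ ≤ (1 + ‖w‖ ^ 2) ^ (α / 2) := by gcongr; linarith
  have hP := Pker_pos hs one_pos w
  have := pns_pos (n := n) hs
  calc ‖Pker n s 1 w * ‖w‖ ^ α‖ = Pker n s 1 w * ‖w‖ ^ α := Real.norm_of_nonneg (by positivity)
    _ ≤ Pker n s 1 w * (1 + ‖w‖ ^ 2) ^ (α / 2) := by gcongr
    _ = pns n s * ((1 + ‖w‖ ^ 2) ^ (-((n : ℝ) + 2 * s) / 2) * (1 + ‖w‖ ^ 2) ^ (α / 2)) := by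
      unfold Pker
      rw [Real.one_rpow, one_pow, add_comm (‖w‖ ^ 2)]; ring
    _ = pns n s * (1 + ‖w‖ ^ 2) ^ (-((n : ℝ) + 2 * s - α) / 2) := by
      rw [← Real.rpow_add hρ]; ring_nf

lemma integrable_Pker_mul_norm_rpow {α : ℝ} (hs : 0 < s) (hα₀ : 0 ≤ α) (hα : α < 2 * s)
    (hz : 0 < z) : Integrable fun w : En n => Pker n s z w * ‖w‖ ^ α := by
  refine (integrable_comp_smul_iff volume _ hz.ne').1 ?_
  simp_rw [Pker_smul_mul_norm_rpow hz]
  exact (integrable_Pker_one_mul_norm_rpow hs hα₀ hα).const_mul _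

lemma integral_Pker_mul_norm_rpow (hz : 0 < z) (α : ℝ) :
    ∫ w : En n, Pker n s z w * ‖w‖ ^ α = z ^ α * ∫ w : En n, Pker n s 1 w * ‖w‖ ^ α := by
  have hscale := Measure.integral_comp_smul (volume : Measure (En n))
    (fun w => Pker n s z w * ‖w‖ ^ α) z
  simp_rw [Pker_smul_mul_norm_rpow hz] at hscale
  rw [integral_const_mul, finrank_euclideanSpace, Fintype.card_fin, smul_eq_mul,
    abs_of_pos (by positivity), Real.rpow_sub_natCast hz.ne'] at hscale
  field_simp at hscale
  exact hscale.symm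

lemma integrable_Pker (hs : 0 < s) (hz : 0 < z) : Integrable (Pker n s z) := by
  simpa using integrable_Pker_mul_norm_rpow (n := n) hs le_rfl (by positivity) hz

lemma integral_Pker (hs : 0 < s) (hz : 0 < z) : ∫ w, Pker n s z w = 1 := by
  have hone : ∫ w, Pker n s 1 w = 1 := by
    have hP (w : En n) : Pker n s 1 w = pns n s * (1 + ‖w‖ ^ 2) ^ (-((n : ℝ) / 2 + s)) := by
      unfold Pker
      rw [Real.one_rpow, one_pow, add_comm (‖w‖ ^ 2), mul_one]; ring_nf
    have hint := integral_one_add_norm_sq_rpow_neg (V := En n) hs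
    simp only [finrank_euclideanSpace, Fintype.card_fin] at hint
    simp_rw [hP, integral_const_mul, hint]
    have := (Real.Gamma_pos_of_pos hs).ne'
    have := (Real.Gamma_pos_of_pos (show 0 < (n : ℝ) / 2 + s by positivity)).ne'
    unfold pns
    field_simp
  simpa [hone] using integral_Pker_mul_norm_rpow (n := n) (s := s) hz 0

lemma Pker_le_of_le {z₁ : ℝ} (hs : 0 < s) (hz₁ : 0 < z₁) (hz : z₁ ≤ z) (w : En n) :
    Pker n s z w ≤ (z / z₁) ^ (2 * s) * Pker n s z₁ w := by
  have hz₀ : 0 < z := hz₁.trans_le hz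
  have := pns_pos (n := n) hs
  have hρ : (‖w‖ ^ 2 + z ^ 2) ^ (-((n : ℝ) + 2 * s) / 2)
      ≤ (‖w‖ ^ 2 + z₁ ^ 2) ^ (-((n : ℝ) + 2 * s) / 2) :=
    Real.rpow_le_rpow_of_nonpos (by positivity) (by gcongr)
      (div_nonpos_of_nonpos_of_nonneg (neg_nonpos.2 (by positivity)) zero_le_two)
  unfold Pker
  rw [Real.div_rpow hz₀.le hz₁.le]
  calc _ ≤ pns n s * z ^ (2 * s) * (‖w‖ ^ 2 + z₁ ^ 2) ^ (-((n : ℝ) + 2 * s) / 2) := by gcongr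
    _ = _ := by field_simp

lemma rpow_neg_mul_Pker (hz : 0 < z) (w : En n) :
    z ^ (-2 * s) * Pker n s z w = pns n s * (‖w‖ ^ 2 + z ^ 2) ^ (-((n : ℝ) + 2 * s) / 2) := by
  have : z ^ (-2 * s) * z ^ (2 * s) = 1 := by
    rw [← Real.rpow_add hz, neg_mul, neg_add_cancel, Real.rpow_zero]
  unfold Pker
  linear_combination pns n s * (‖w‖ ^ 2 + z ^ 2) ^ (-((n : ℝ) + 2 * s) / 2) * this

lemma rpow_neg_mul_Pker_le (hs : 0 < s) (hz : 0 < z) {w : En n} (hw : w ≠ 0) :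
    z ^ (-2 * s) * Pker n s z w ≤ pns n s / ‖w‖ ^ ((n : ℝ) + 2 * s) := by
  have hw₀ : 0 < ‖w‖ := norm_pos_iff.2 hw
  have := pns_pos (n := n) hs
  have hnorm : (‖w‖ ^ 2) ^ (-((n : ℝ) + 2 * s) / 2) = (‖w‖ ^ ((n : ℝ) + 2 * s))⁻¹ := by
    rw [← Real.rpow_natCast_mul hw₀.le, ← Real.rpow_neg hw₀.le]; congr 1; push_cast; ring
  rw [rpow_neg_mul_Pker hz, div_eq_mul_inv (pns n s), ← hnorm]
  gcongr _ * ?_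
  exact Real.rpow_le_rpow_of_nonpos (by positivity) (by nlinarith)
    (div_nonpos_of_nonpos_of_nonneg (neg_nonpos.2 (by positivity)) zero_le_two)

end PoissonKernel

section PoissonFlux

variable {n : ℕ} {s z : ℝ}

/-- The weighted normal derivative `z^{1-2s} ∂_z P_z^{(s)}` of the Poisson kernel, in closed
form. -/
def poissonFlux (n : ℕ) (s z : ℝ) (w : En n) : ℝ :=
  z ^ (-2 * s) * Pker n s z w * (2 * s - (n + 2 * s) * (z ^ 2 / (‖w‖ ^ 2 + z ^ 2)))

/-- The `z`-derivative of `poissonFlux`, in closed form. -/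
def poissonFluxDeriv (n : ℕ) (s z : ℝ) (w : En n) : ℝ :=
  z ^ (-2 * s - 1) * Pker n s z w * ((n + 2 * s) * (z ^ 2 / (‖w‖ ^ 2 + z ^ 2))
    * ((n + 2 * s + 2) * (z ^ 2 / (‖w‖ ^ 2 + z ^ 2)) - (2 * s + 2)))

lemma sq_div_norm_sq_add_sq_mem_Icc (hz : 0 < z) (w : En n) :
    z ^ 2 / (‖w‖ ^ 2 + z ^ 2) ∈ Icc (0 : ℝ) 1 :=
  ⟨by positivity, div_le_one_of_le₀ (by nlinarith [sq_nonneg ‖w‖]) (by positivity)⟩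

lemma continuous_sq_div_norm_sq_add_sq (hz : 0 < z) :
    Continuous fun w : En n => z ^ 2 / (‖w‖ ^ 2 + z ^ 2) :=
  continuous_const.div (by fun_prop) fun w => by positivity

lemma continuous_poissonFlux (hz : 0 < z) : Continuous (poissonFlux n s z) := by
  have := continuous_sq_div_norm_sq_add_sq (n := n) hz
  have := continuous_Pker (n := n) (s := s) hz
  unfold poissonFlux
  fun_prop

lemma continuous_poissonFluxDeriv (hz : 0 < z) : Continuous (poissonFluxDeriv n s z) := by
  have := continuous_sq_div_norm_sq_add_sq (n := n) hz
  have := continuous_Pker (n := n) (s := s) hz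
  unfold poissonFluxDeriv
  fun_prop

lemma abs_poissonFlux_le (hs : 0 < s) (hz : 0 < z) (w : En n) :
    |poissonFlux n s z w| ≤ (n + 2 * s) * (z ^ (-2 * s) * Pker n s z w) := by
  have hP := Pker_pos hs hz w
  obtain ⟨hθ₀, hθ₁⟩ := sq_div_norm_sq_add_sq_mem_Icc hz w
  unfold poissonFlux
  set θ := z ^ 2 / (‖w‖ ^ 2 + z ^ 2)
  rw [abs_mul, abs_of_pos (by positivity), mul_comm]
  gcongr
  rw [abs_le]
  constructor <;> nlinarith

lemma abs_poissonFluxDeriv_le (hs : 0 < s) (hz : 0 < z) (w : En n) :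
    |poissonFluxDeriv n s z w|
      ≤ (n + 2 * s) * (n + 2 * s + 2) * (z ^ (-2 * s - 1) * Pker n s z w) := by
  have hP := Pker_pos hs hz w
  obtain ⟨hθ₀, hθ₁⟩ := sq_div_norm_sq_add_sq_mem_Icc hz w
  unfold poissonFluxDeriv
  set θ := z ^ 2 / (‖w‖ ^ 2 + z ^ 2)
  have hfactor : |(n + 2 * s + 2) * θ - (2 * s + 2)| ≤ n + 2 * s + 2 := by
    rw [abs_le]
    constructor <;> nlinarith
  rw [abs_mul, abs_of_pos (by positivity), mul_comm, abs_mul, abs_of_nonneg (by positivity)]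
  gcongr
  exact mul_le_of_le_one_right (by positivity) hθ₁

lemma hasDerivAt_norm_sq_add_sq_rpow (hz : 0 < z) (p : ℝ) (w : En n) :
    HasDerivAt (fun t => (‖w‖ ^ 2 + t ^ 2) ^ p)
      (2 * p * z ^ (-1 : ℝ) * (z ^ 2 / (‖w‖ ^ 2 + z ^ 2)) * (‖w‖ ^ 2 + z ^ 2) ^ p) z := by
  have hρ : ‖w‖ ^ 2 + z ^ 2 ≠ 0 := by positivity
  have hsq : HasDerivAt (fun t => ‖w‖ ^ 2 + t ^ 2) (2 * z) z := by
    simpa using (hasDerivAt_pow 2 z).const_add (‖w‖ ^ 2)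
  refine (hsq.rpow_const (p := p) (Or.inl hρ)).congr_deriv ?_
  rw [Real.rpow_sub_one hρ, Real.rpow_neg_one]
  field_simp

lemma hasDerivAt_Pker (hz : 0 < z) (w : En n) :
    HasDerivAt (fun t => Pker n s t w) (z ^ (2 * s - 1) * poissonFlux n s z w) z := by
  have hpow : HasDerivAt (fun t : ℝ => t ^ (2 * s)) (2 * s * z ^ (2 * s - 1)) z :=
    Real.hasDerivAt_rpow_const (Or.inl hz.ne')
  refine ((hpow.const_mul (pns n s)).mul
    (hasDerivAt_norm_sq_add_sq_rpow hz (-((n : ℝ) + 2 * s) / 2) w)).congr_deriv ?_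
  unfold poissonFlux
  rw [rpow_neg_mul_Pker hz, Real.rpow_sub_one hz.ne', Real.rpow_neg_one]
  ring

lemma hasDerivAt_poissonFlux (hz : 0 < z) (w : En n) :
    HasDerivAt (fun t => poissonFlux n s t w) (poissonFluxDeriv n s z w) z := by
  set p := -((n : ℝ) + 2 * s) / 2 with hp
  have hθ : HasDerivAt (fun t => t ^ 2 / (‖w‖ ^ 2 + t ^ 2))
      (2 * z ^ (-1 : ℝ) * (z ^ 2 / (‖w‖ ^ 2 + z ^ 2)) * (1 - z ^ 2 / (‖w‖ ^ 2 + z ^ 2))) z := by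
    have hρ : ‖w‖ ^ 2 + z ^ 2 ≠ 0 := by positivity
    have hsq : HasDerivAt (fun t : ℝ => t ^ 2) (2 * z) z := by simpa using hasDerivAt_pow 2 z
    refine (hsq.div (hsq.const_add (‖w‖ ^ 2)) hρ).congr_deriv ?_
    rw [Real.rpow_neg_one]
    field_simp
  have hder := ((hasDerivAt_norm_sq_add_sq_rpow hz p w).const_mul (pns n s)).mul
    ((hθ.const_mul ((n : ℝ) + 2 * s)).const_sub (2 * s))
  have heq : (fun t => poissonFlux n s t w) =ᶠ[𝓝 z] fun t =>
      pns n s * (‖w‖ ^ 2 + t ^ 2) ^ p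
        * (2 * s - (n + 2 * s) * (t ^ 2 / (‖w‖ ^ 2 + t ^ 2))) := by
    filter_upwards [lt_mem_nhds hz] with t ht
    rw [poissonFlux, rpow_neg_mul_Pker ht]
  refine (hder.congr_of_eventuallyEq heq).congr_deriv ?_
  have hpow : z ^ (-2 * s - 1) = z ^ (-1 : ℝ) * z ^ (-2 * s) := by
    rw [← Real.rpow_add hz]; ring_nf
  rw [poissonFluxDeriv, hpow, mul_assoc (z ^ (-1 : ℝ)), rpow_neg_mul_Pker hz, ← hp]
  generalize (‖w‖ ^ 2 + z ^ 2) ^ p = R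
  rw [hp]
  ring

end PoissonFlux

section CoordinateDerivatives

variable {n : ℕ} {f g : En n → ℝ}

lemma contDiff_pd {k m : WithTop ℕ∞} (hf : ContDiff ℝ m f) (hkm : k + 1 ≤ m) (i : Fin n) :
    ContDiff ℝ k (pd i f) :=
  (hf.fderiv_right hkm).clm_apply contDiff_const

lemma hasCompactSupport_pd (hf : HasCompactSupport f) (i : Fin n) : HasCompactSupport (pd i f) :=
  hf.fderiv_apply (𝕜 := ℝ) _

lemma pd_sub_const (c : ℝ) (i : Fin n) : pd i (fun y => f y - c) = pd i f := by
  ext y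
  simp [pd, fderiv_sub_const]

lemma pd_mul (hf : Differentiable ℝ f) (hg : Differentiable ℝ g) (i : Fin n) :
    pd i (fun y => f y * g y) = fun y => f y * pd i g y + g y * pd i f y := by
  ext y
  simp [pd, fderiv_fun_mul (hf y) (hg y)]

lemma pd_const_mul (c : ℝ) (i : Fin n) :
    pd i (fun y => c * f y) = fun y => c * pd i f y := by
  ext y
  exact DFunLike.congr_fun (congr_fun (fderiv_const_smul_field (f := f) c) y) _

lemma pd_coord (i : Fin n) : pd i (fun w : En n => w i) = fun _ => 1 := by
  ext w
  have h : HasFDerivAt (fun w : En n => w i) (EuclideanSpace.proj i : En n →L[ℝ] ℝ) w :=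
    (EuclideanSpace.proj i : En n →L[ℝ] ℝ).hasFDerivAt
  simp [pd, h.fderiv]

lemma pd_comp_sub_left (hf : Differentiable ℝ f) (i : Fin n) (x : En n) :
    pd i (fun y => f (x - y)) = fun y => -pd i f (x - y) := by
  ext y
  have h : HasFDerivAt (fun y => f (x - y)) _ y :=
    (hf (x - y)).hasFDerivAt.comp y ((hasFDerivAt_id y).const_sub x)
  simp [pd, h.fderiv]

end CoordinateDerivatives

section PoissonKernelSpaceDerivatives

variable {n : ℕ} {s z : ℝ}

lemma contDiff_norm_sq_add_sq_rpow (hz : 0 < z) (p : ℝ) {k : WithTop ℕ∞} :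
    ContDiff ℝ k fun w : En n => (‖w‖ ^ 2 + z ^ 2) ^ p :=
  ((contDiff_norm_sq ℝ).add contDiff_const).rpow_const_of_ne fun w => by positivity

lemma contDiff_Pker (hz : 0 < z) {k : WithTop ℕ∞} : ContDiff ℝ k (Pker n s z) :=
  contDiff_const.mul (contDiff_norm_sq_add_sq_rpow hz _)

lemma pd_norm_sq_add_sq_rpow (hz : 0 < z) (p : ℝ) (i : Fin n) :
    pd i (fun w => (‖w‖ ^ 2 + z ^ 2) ^ p)
      = fun w => 2 * p * (w i * (‖w‖ ^ 2 + z ^ 2) ^ (p - 1)) := by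
  ext w
  have hsq := (hasStrictFDerivAt_norm_sq w).hasFDerivAt.add_const (z ^ 2)
  have hrpow := hsq.rpow_const (p := p) (Or.inl (by positivity))
  simp [pd, hrpow.fderiv, EuclideanSpace.inner_single_right]
  ring

lemma pd_Pker (hz : 0 < z) (i : Fin n) :
    pd i (Pker n s z) = fun w => -(n + 2 * s) * (pns n s * z ^ (2 * s))
      * (w i * (‖w‖ ^ 2 + z ^ 2) ^ (-((n : ℝ) + 2 * s) / 2 - 1)) := by
  unfold Pker
  rw [pd_const_mul, pd_norm_sq_add_sq_rpow hz]
  ext w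
  ring

lemma pd_pd_Pker (hz : 0 < z) (i : Fin n) (w : En n) :
    pd i (pd i (Pker n s z)) w = (n + 2 * s) * Pker n s z w
      * ((n + 2 * s + 2) * w i ^ 2 / (‖w‖ ^ 2 + z ^ 2) - 1) / (‖w‖ ^ 2 + z ^ 2) := by
  have hcoord : Differentiable ℝ fun w : En n => w i := by fun_prop
  have hrpow := (contDiff_norm_sq_add_sq_rpow (n := n) hz (-((n : ℝ) + 2 * s) / 2 - 1)
    (k := 1)).differentiable one_ne_zero
  have hρ : ‖w‖ ^ 2 + z ^ 2 ≠ 0 := by positivity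
  rw [pd_Pker hz, pd_const_mul, pd_mul hcoord hrpow, pd_norm_sq_add_sq_rpow hz, pd_coord]
  simp only [Pker, Real.rpow_sub_one hρ]
  field_simp
  ring

lemma abs_pd_Pker_le (hs : 0 < s) (hz : 0 < z) (i : Fin n) (w : En n) :
    |pd i (Pker n s z) w| ≤ (n + 2 * s) / z * Pker n s z w := by
  have hP := Pker_pos hs hz w
  have hρ : 0 < ‖w‖ ^ 2 + z ^ 2 := by positivity
  have hpd : pd i (Pker n s z) w = (n + 2 * s) * Pker n s z w * (-w i / (‖w‖ ^ 2 + z ^ 2)) := by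
    simp only [pd_Pker hz, Pker, Real.rpow_sub_one hρ.ne']
    ring
  have hle : |-w i / (‖w‖ ^ 2 + z ^ 2)| ≤ 1 / z := by
    rw [abs_div, abs_of_pos hρ, abs_neg, div_le_div_iff₀ hρ hz]
    nlinarith [PiLp.norm_apply_le w i, Real.norm_eq_abs (w i), sq_nonneg (‖w‖ - z), norm_nonneg w]
  rw [hpd, abs_mul, abs_of_pos (by positivity)]
  calc _ ≤ (n + 2 * s) * Pker n s z w * (1 / z) := by gcongr
    _ = _ := by ring

lemma abs_pd_pd_Pker_le (hs : 0 < s) (hz : 0 < z) (i : Fin n) (w : En n) :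
    |pd i (pd i (Pker n s z)) w| ≤ (n + 2 * s) * (n + 2 * s + 2) / z ^ 2 * Pker n s z w := by
  have hP := Pker_pos hs hz w
  have hρ : 0 < ‖w‖ ^ 2 + z ^ 2 := by positivity
  have hfactor : |(n + 2 * s + 2) * w i ^ 2 / (‖w‖ ^ 2 + z ^ 2) - 1| ≤ n + 2 * s + 2 := by
    have hwi : w i ^ 2 ≤ ‖w‖ ^ 2 + z ^ 2 := by
      nlinarith [PiLp.norm_apply_le w i, Real.norm_eq_abs (w i), sq_abs (w i), abs_nonneg (w i)]
    have hquot₁ : w i ^ 2 / (‖w‖ ^ 2 + z ^ 2) ≤ 1 := div_le_one_of_le₀ hwi hρ.le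
    have hquot₀ : 0 ≤ w i ^ 2 / (‖w‖ ^ 2 + z ^ 2) := by positivity
    rw [mul_div_assoc, abs_le]
    constructor <;> nlinarith
  rw [pd_pd_Pker hz, abs_div, abs_of_pos hρ, abs_mul,
    abs_of_pos (a := _ * Pker n s z w) (by positivity)]
  calc _ ≤ (n + 2 * s) * Pker n s z w * (n + 2 * s + 2) / z ^ 2 := by
        gcongr
        exact le_add_of_nonneg_left (sq_nonneg _)
    _ = _ := by ring

-- This is the extension equation `z^{1-2s} Δ_w P + ∂_z (z^{1-2s} ∂_z P) = 0`.
lemma rpow_mul_lapX_Pker (hz : 0 < z) (w : En n) :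
    z ^ (1 - 2 * s) * lapX (Pker n s z) w = -poissonFluxDeriv n s z w := by
  have hρ : ‖w‖ ^ 2 + z ^ 2 ≠ 0 := by positivity
  have hnorm : ∑ i, w i ^ 2 = ‖w‖ ^ 2 := (EuclideanSpace.real_norm_sq_eq w).symm
  have hpow : z ^ (1 - 2 * s) = z ^ (-2 * s - 1) * z ^ 2 := by
    rw [← Real.rpow_add_natCast hz.ne']; push_cast; ring_nf
  have hlap : lapX (Pker n s z) w = (n + 2 * s) * Pker n s z w
      * ((n + 2 * s + 2) * ‖w‖ ^ 2 / (‖w‖ ^ 2 + z ^ 2) - n) / (‖w‖ ^ 2 + z ^ 2) := by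
    simp only [lapX, pd_pd_Pker hz, ← Finset.sum_div, ← Finset.mul_sum, Finset.sum_sub_distrib,
      Finset.sum_const, Finset.card_univ, Fintype.card_fin, nsmul_eq_mul, mul_one, hnorm]
  rw [hlap, hpow, poissonFluxDeriv]
  field_simp
  ring

end PoissonKernelSpaceDerivatives

section PoissonIntegrals

variable {n : ℕ} {s z : ℝ} {k f : En n → ℝ}

lemma isBigO_one_of_hasCompactSupport (hf : Continuous f) (hfc : HasCompactSupport f) :
    f =O[⊤] (1 : En n → ℝ) := by
  obtain ⟨M, hM⟩ := hfc.exists_bound_of_continuous hf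
  exact isBigO_top.2 ⟨M, fun y => by simpa using hM y⟩

lemma exists_abs_le_of_isBigO_one (hf : f =O[⊤] (1 : En n → ℝ)) :
    ∃ M, 0 ≤ M ∧ ∀ y, |f y| ≤ M := by
  obtain ⟨M, hM₀, hM⟩ := hf.exists_nonneg
  exact ⟨M, hM₀, fun y => by simpa using isBigOWith_top.1 hM y⟩

lemma integrable_mul_of_abs_le_Pker (hs : 0 < s) (hz : 0 < z) (hk : Continuous k) {C : ℝ}
    (hkP : ∀ w, |k w| ≤ C * Pker n s z w) (hf : Continuous f) (hfb : f =O[⊤] (1 : En n → ℝ))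
    (x : En n) : Integrable fun y => k (x - y) * f y := by
  obtain ⟨M, -, hM⟩ := exists_abs_le_of_isBigO_one hfb
  have hki : Integrable k := ((integrable_Pker hs hz).const_mul C).mono' hk.aestronglyMeasurable
    (Eventually.of_forall hkP)
  exact (hki.comp_sub_left x).mul_bdd hf.aestronglyMeasurable (Eventually.of_forall hM)

lemma integrable_Pker_mul (hs : 0 < s) (hz : 0 < z) (hf : Continuous f)
    (hfb : f =O[⊤] (1 : En n → ℝ)) (x : En n) : Integrable fun y => Pker n s z (x - y) * f y :=
  integrable_mul_of_abs_le_Pker hs hz (continuous_Pker hz) (C := 1)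
    (fun w => by rw [one_mul, abs_of_pos (Pker_pos hs hz w)]) hf hfb x

lemma integral_Pker_sub (hs : 0 < s) (hz : 0 < z) (x : En n) : ∫ y, Pker n s z (x - y) = 1 := by
  rw [integral_sub_left_eq_self (Pker n s z) volume x, integral_Pker hs hz]

/-- The moment `∫ P_1^{(s)}(w) |w|^α dw` of the Poisson kernel. -/
def poissonMoment (n : ℕ) (s α : ℝ) : ℝ := ∫ w : En n, Pker n s 1 w * ‖w‖ ^ α

lemma abs_integral_le_of_abs_le_Pker_moment {F : En n → ℝ} {C₀ C₁ α : ℝ} {x : En n} (hs : 0 < s)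
    (hz : 0 < z) (hα₀ : 0 ≤ α) (hα : α < 2 * s)
    (hF : ∀ y, |F y| ≤ (C₀ + C₁ * ‖x - y‖ ^ α) * Pker n s z (x - y)) :
    |∫ y, F y| ≤ C₀ + C₁ * (z ^ α * poissonMoment n s α) := by
  have hP := (integrable_Pker (n := n) hs hz).comp_sub_left x
  have hPα := (integrable_Pker_mul_norm_rpow (n := n) hs hα₀ hα hz).comp_sub_left x
  calc |∫ y, F y|
      ≤ ∫ y, C₀ * Pker n s z (x - y) + C₁ * (Pker n s z (x - y) * ‖x - y‖ ^ α) := by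
        rw [← Real.norm_eq_abs]
        refine norm_integral_le_of_norm_le ((hP.const_mul C₀).add (hPα.const_mul C₁))
          (Eventually.of_forall fun y => (hF y).trans_eq ?_)
        ring
    _ = C₀ + C₁ * (z ^ α * poissonMoment n s α) := by
        rw [integral_add (hP.const_mul C₀) (hPα.const_mul C₁), integral_const_mul,
          integral_const_mul, integral_Pker_sub hs hz,
          integral_sub_left_eq_self (fun w : En n => Pker n s z w * ‖w‖ ^ α) volume x,
          integral_Pker_mul_norm_rpow hz, poissonMoment, mul_one]

lemma abs_integral_le_of_abs_le_Pker {F : En n → ℝ} {C : ℝ} {x : En n} (hs : 0 < s) (hz : 0 < z)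
    (hF : ∀ y, |F y| ≤ C * Pker n s z (x - y)) : |∫ y, F y| ≤ C := by
  simpa using abs_integral_le_of_abs_le_Pker_moment (C₁ := 0) hs hz le_rfl (by positivity)
    (by simpa using hF)

-- Near `z₀` the kernels `P_z` are uniformly dominated by a multiple of `P_{z₀/2}`.
lemma hasDerivAt_integral_of_abs_le_Pker {F F' : ℝ → En n → ℝ} {φ : ℝ → ℝ} {x : En n} {z₀ : ℝ}
    (hs : 0 < s) (hz₀ : 0 < z₀) (hφ : ContinuousAt φ z₀) (hF : ∀ z > 0, Continuous (F z))
    (hFi : Integrable (F z₀)) (hF' : Continuous (F' z₀))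
    (hderiv : ∀ z > 0, ∀ y, HasDerivAt (F · y) (F' z y) z)
    (hle : ∀ z > 0, ∀ y, |F' z y| ≤ φ z * Pker n s z (x - y)) :
    HasDerivAt (fun z => ∫ y, F z y) (∫ y, F' z₀ y) z₀ := by
  have hnhds : {z | z₀ / 2 < z ∧ z < 2 * z₀ ∧ φ z < |φ z₀| + 1} ∈ 𝓝 z₀ := by
    filter_upwards [lt_mem_nhds (half_lt_self hz₀),
      gt_mem_nhds (show z₀ < 2 * z₀ by linarith),
      hφ.eventually_lt_const ((le_abs_self _).trans_lt (lt_add_one _))] with z h₁ h₂ h₃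
    exact ⟨h₁, h₂, h₃⟩
  refine (hasDerivAt_integral_of_dominated_loc_of_deriv_le
    (bound := fun y => (|φ z₀| + 1) * (4 ^ (2 * s) * Pker n s (z₀ / 2) (x - y))) hnhds
    ?_ hFi hF'.aestronglyMeasurable ?_ ?_ ?_).2
  · filter_upwards [lt_mem_nhds hz₀] with z hz using (hF z hz).aestronglyMeasurable
  · refine Eventually.of_forall fun y z ⟨h₁, h₂, h₃⟩ => ?_
    have hz : 0 < z := (half_pos hz₀).trans h₁
    have hP := Pker_pos hs hz (x - y)
    have hP₂ := Pker_pos hs (half_pos hz₀) (x - y)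
    calc ‖F' z y‖ ≤ φ z * Pker n s z (x - y) := hle z hz y
      _ ≤ (|φ z₀| + 1) * ((z / (z₀ / 2)) ^ (2 * s) * Pker n s (z₀ / 2) (x - y)) := by
        gcongr
        exact Pker_le_of_le hs (half_pos hz₀) h₁.le _
      _ ≤ (|φ z₀| + 1) * (4 ^ (2 * s) * Pker n s (z₀ / 2) (x - y)) := by
        gcongr
        rw [div_le_iff₀ (half_pos hz₀)]
        linarith
  · exact (((integrable_Pker hs (half_pos hz₀)).comp_sub_left x).const_mul _).const_mul _
  · exact Eventually.of_forall fun y z hz => hderiv z ((half_pos hz₀).trans hz.1) y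

end PoissonIntegrals

section Extension

variable {n : ℕ} {s z : ℝ} {f : En n → ℝ}

/-- The weighted normal derivative `z^{1-2s} ∂_z (P_z^{(s)} ∗ f)` of the extension of `f`, written
as the convolution of `f` with `poissonFlux`. -/
def fluxConv (n : ℕ) (s z : ℝ) (f : En n → ℝ) (x : En n) : ℝ := ∫ y, poissonFlux n s z (x - y) * f y

lemma integrable_poissonFlux_mul (hs : 0 < s) (hz : 0 < z) (hf : Continuous f)
    (hfb : f =O[⊤] (1 : En n → ℝ)) (x : En n) :
    Integrable fun y => poissonFlux n s z (x - y) * f y :=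
  integrable_mul_of_abs_le_Pker hs hz (continuous_poissonFlux hz)
    (fun w => (abs_poissonFlux_le hs hz w).trans_eq (mul_assoc _ _ _).symm) hf hfb x

lemma integrable_poissonFluxDeriv_mul (hs : 0 < s) (hz : 0 < z) (hf : Continuous f)
    (hfb : f =O[⊤] (1 : En n → ℝ)) (x : En n) :
    Integrable fun y => poissonFluxDeriv n s z (x - y) * f y :=
  integrable_mul_of_abs_le_Pker hs hz (continuous_poissonFluxDeriv hz)
    (fun w => (abs_poissonFluxDeriv_le hs hz w).trans_eq (mul_assoc _ _ _).symm) hf hfb x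

lemma abs_Pconv_le (hs : 0 < s) (hz : 0 < z) {M : ℝ} (hM : ∀ y, |f y| ≤ M) (x : En n) :
    |Pconv n s z f x| ≤ M :=
  abs_integral_le_of_abs_le_Pker (x := x) hs hz fun y => by
    rw [abs_mul, abs_of_pos (Pker_pos hs hz _), mul_comm]
    exact mul_le_mul_of_nonneg_right (hM y) (Pker_pos hs hz _).le

lemma abs_fluxConv_le (hs : 0 < s) (hz : 0 < z) {M : ℝ} (hM : ∀ y, |f y| ≤ M) (x : En n) :
    |fluxConv n s z f x| ≤ (n + 2 * s) * M * z ^ (-2 * s) :=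
  abs_integral_le_of_abs_le_Pker (x := x) hs hz fun y => by
    rw [abs_mul]
    calc _ ≤ (n + 2 * s) * (z ^ (-2 * s) * Pker n s z (x - y)) * M :=
          mul_le_mul (abs_poissonFlux_le hs hz _) (hM y) (abs_nonneg _)
            ((abs_nonneg _).trans (abs_poissonFlux_le hs hz _))
      _ = _ := by ring

lemma hasDerivAt_Pconv (hs : 0 < s) (hz : 0 < z) (hf : Continuous f)
    (hfb : f =O[⊤] (1 : En n → ℝ)) (x : En n) :
    HasDerivAt (fun t => Pconv n s t f x) (z ^ (2 * s - 1) * fluxConv n s z f x) z := by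
  obtain ⟨M, -, hM⟩ := exists_abs_le_of_isBigO_one hfb
  rw [fluxConv, ← integral_const_mul]
  refine hasDerivAt_integral_of_abs_le_Pker (x := x)
    (F' := fun z y => z ^ (2 * s - 1) * (poissonFlux n s z (x - y) * f y))
    (φ := fun z => z ^ (2 * s - 1) * ((n + 2 * s) * z ^ (-2 * s) * M)) hs hz ?_ ?_
    (integrable_Pker_mul hs hz hf hfb x) ?_ ?_ ?_
  · fun_prop (disch := exact Or.inl hz.ne')
  · intro t ht
    have := continuous_Pker (n := n) (s := s) ht
    fun_prop
  · have := continuous_poissonFlux (n := n) (s := s) hz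
    fun_prop
  · intro t ht y
    exact ((hasDerivAt_Pker ht (x - y)).mul_const (f y)).congr_deriv (mul_assoc _ _ _)
  · intro t ht y
    rw [abs_mul, abs_mul, abs_of_pos (Real.rpow_pos_of_pos ht _)]
    calc _ ≤ t ^ (2 * s - 1) * ((n + 2 * s) * (t ^ (-2 * s) * Pker n s t (x - y)) * M) := by
          gcongr
          · exact (abs_nonneg _).trans (abs_poissonFlux_le hs ht _)
          · exact abs_poissonFlux_le hs ht _
          · exact hM y
      _ = _ := by ring

lemma hasDerivAt_fluxConv_integral (hs : 0 < s) (hz : 0 < z) (hf : Continuous f)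
    (hfb : f =O[⊤] (1 : En n → ℝ)) (x : En n) :
    HasDerivAt (fun t => fluxConv n s t f x) (∫ y, poissonFluxDeriv n s z (x - y) * f y) z := by
  obtain ⟨M, -, hM⟩ := exists_abs_le_of_isBigO_one hfb
  refine hasDerivAt_integral_of_abs_le_Pker (x := x)
    (F' := fun z y => poissonFluxDeriv n s z (x - y) * f y)
    (φ := fun z => (n + 2 * s) * (n + 2 * s + 2) * z ^ (-2 * s - 1) * M) hs hz ?_ ?_
    (integrable_poissonFlux_mul hs hz hf hfb x) ?_ ?_ ?_
  · fun_prop (disch := exact Or.inl hz.ne')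
  · intro t ht
    have := continuous_poissonFlux (n := n) (s := s) ht
    fun_prop
  · have := continuous_poissonFluxDeriv (n := n) (s := s) hz
    fun_prop
  · exact fun t ht y => (hasDerivAt_poissonFlux ht (x - y)).mul_const (f y)
  · intro t ht y
    rw [abs_mul]
    calc _ ≤ (n + 2 * s) * (n + 2 * s + 2) * (t ^ (-2 * s - 1) * Pker n s t (x - y)) * M := by
          gcongr
          · exact (abs_nonneg _).trans (abs_poissonFluxDeriv_le hs ht _)
          · exact abs_poissonFluxDeriv_le hs ht _
          · exact hM y
      _ = _ := by ring

-- Differentiate `∫ P_z = 1` in `z`.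
lemma integral_poissonFlux_sub (hs : 0 < s) (hz : 0 < z) (x : En n) :
    ∫ y, poissonFlux n s z (x - y) = 0 := by
  have hder := hasDerivAt_Pconv (f := fun _ : En n => (1 : ℝ)) hs hz continuous_const
    (isBigO_refl _ _) x
  have hone : (fun t => Pconv n s t (fun _ : En n => (1 : ℝ)) x) =ᶠ[𝓝 z] fun _ => 1 := by
    filter_upwards [lt_mem_nhds hz] with t ht
    simpa [Pconv] using integral_Pker_sub hs ht x
  have hzero := hder.unique ((hasDerivAt_const z (1 : ℝ)).congr_of_eventuallyEq hone)
  simpa [fluxConv, (Real.rpow_pos_of_pos hz _).ne'] using hzero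

end Extension

section Convolution

variable {n : ℕ} {s z : ℝ} {k f g v : En n → ℝ}

lemma integral_comp_sub_mul_eq_convolution (k v : En n → ℝ) :
    (fun x => ∫ y, k (x - y) * v y)
      = convolution k v (ContinuousLinearMap.mul ℝ ℝ) volume := by
  ext x
  rw [convolution_eq_swap]
  rfl

lemma contDiff_integral_comp_sub_mul {m : ℕ∞} (hk : Continuous k) (hv : ContDiff ℝ m v)
    (hvc : HasCompactSupport v) : ContDiff ℝ m fun x => ∫ y, k (x - y) * v y := by
  rw [integral_comp_sub_mul_eq_convolution]
  exact hvc.contDiff_convolution_right _ hk.locallyIntegrable hv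

lemma pd_integral_comp_sub_mul (hk : Continuous k) (hv : ContDiff ℝ 1 v)
    (hvc : HasCompactSupport v) (i : Fin n) :
    pd i (fun x => ∫ y, k (x - y) * v y) = fun x => ∫ y, k (x - y) * pd i v y := by
  simp only [integral_comp_sub_mul_eq_convolution]
  ext x
  have hfderiv := hvc.hasFDerivAt_convolution_right (ContinuousLinearMap.mul ℝ ℝ)
    hk.locallyIntegrable hv (μ := volume) x
  have hexists : ConvolutionExistsAt k (fderiv ℝ v) x
      (ContinuousLinearMap.precompR (En n) (ContinuousLinearMap.mul ℝ ℝ)) volume :=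
    HasCompactSupport.convolutionExists_right _ (hvc.fderiv (𝕜 := ℝ)) hk.locallyIntegrable
      (hv.continuous_fderiv one_ne_zero) x
  rw [pd, hfderiv.fderiv]
  exact ContinuousLinearMap.integral_apply hexists _

lemma contDiff_Pconv {m : ℕ∞} (hz : 0 < z) (hv : ContDiff ℝ m v) (hvc : HasCompactSupport v) :
    ContDiff ℝ m (Pconv n s z v) :=
  contDiff_integral_comp_sub_mul (continuous_Pker hz) hv hvc

lemma continuous_fluxConv (hz : 0 < z) (hv : Continuous v) (hvc : HasCompactSupport v) :
    Continuous (fluxConv n s z v) :=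
  contDiff_zero.1 (contDiff_integral_comp_sub_mul (m := 0) (continuous_poissonFlux hz)
    (contDiff_zero.2 hv) hvc)

lemma pd_Pconv (hz : 0 < z) (hv : ContDiff ℝ 1 v) (hvc : HasCompactSupport v) (i : Fin n) :
    pd i (Pconv n s z v) = Pconv n s z (pd i v) :=
  pd_integral_comp_sub_mul (continuous_Pker hz) hv hvc i

lemma pd_fluxConv (hz : 0 < z) (hv : ContDiff ℝ 1 v) (hvc : HasCompactSupport v) (i : Fin n) :
    pd i (fluxConv n s z v) = fluxConv n s z (pd i v) :=
  pd_integral_comp_sub_mul (continuous_poissonFlux hz) hv hvc i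

lemma isBigO_one_mul (hf : f =O[⊤] (1 : En n → ℝ)) (hg : g =O[⊤] (1 : En n → ℝ)) :
    (fun y => f y * g y) =O[⊤] (1 : En n → ℝ) :=
  (hf.mul hg).congr_right fun _ => mul_one 1

lemma isBigO_one_sq (hf : f =O[⊤] (1 : En n → ℝ)) :
    (fun y => f y ^ 2) =O[⊤] (1 : En n → ℝ) := by
  simpa only [sq] using isBigO_one_mul hf hf

lemma isBigO_one_Pconv (hs : 0 < s) (hz : 0 < z) (hf : f =O[⊤] (1 : En n → ℝ)) :
    Pconv n s z f =O[⊤] (1 : En n → ℝ) := by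
  obtain ⟨M, -, hM⟩ := exists_abs_le_of_isBigO_one hf
  exact isBigO_top.2 ⟨M, fun x => by simpa using abs_Pconv_le hs hz hM x⟩

end Convolution

section Green

variable {n : ℕ} {s z : ℝ} {k f v : En n → ℝ}

/-- `C²` functions which are bounded together with their first and pure second partial
derivatives. -/
structure IsBddC2 (f : En n → ℝ) : Prop where
  contDiff : ContDiff ℝ 2 f
  isBigO_one : f =O[⊤] (1 : En n → ℝ)
  isBigO_one_pd (i : Fin n) : pd i f =O[⊤] (1 : En n → ℝ)
  isBigO_one_pd_pd (i : Fin n) : pd i (pd i f) =O[⊤] (1 : En n → ℝ)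

lemma contDiff_pd_of_two (hf : ContDiff ℝ 2 f) (i : Fin n) : ContDiff ℝ 1 (pd i f) :=
  contDiff_pd hf (by norm_num) i

lemma continuous_pd_pd (hf : ContDiff ℝ 2 f) (i : Fin n) : Continuous (pd i (pd i f)) :=
  (contDiff_pd (k := 0) (contDiff_pd_of_two hf i) (by norm_num) i).continuous

lemma IsBddC2.continuous_lapX (hf : IsBddC2 f) : Continuous (lapX f) :=
  continuous_finsetSum _ fun i _ => continuous_pd_pd hf.contDiff i

lemma IsBddC2.isBigO_one_lapX (hf : IsBddC2 f) : lapX f =O[⊤] (1 : En n → ℝ) :=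
  .fun_sum fun i _ => hf.isBigO_one_pd_pd i

lemma isBddC2_of_hasCompactSupport (hv : ContDiff ℝ 2 v) (hvc : HasCompactSupport v) :
    IsBddC2 v where
  contDiff := hv
  isBigO_one := isBigO_one_of_hasCompactSupport hv.continuous hvc
  isBigO_one_pd i := isBigO_one_of_hasCompactSupport (contDiff_pd_of_two hv i).continuous
    (hasCompactSupport_pd hvc i)
  isBigO_one_pd_pd i := isBigO_one_of_hasCompactSupport (continuous_pd_pd hv i)
    (hasCompactSupport_pd (hasCompactSupport_pd hvc i) i)

lemma isBddC2_Pconv (hs : 0 < s) (hz : 0 < z) (hv : ContDiff ℝ 2 v) (hvc : HasCompactSupport v) :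
    IsBddC2 (Pconv n s z v) := by
  have hvb := isBddC2_of_hasCompactSupport hv hvc
  have hpd (i) := pd_Pconv (s := s) hz (hv.of_le one_le_two) hvc i
  have hpd₂ (i) := pd_Pconv (s := s) hz (contDiff_pd_of_two hv i) (hasCompactSupport_pd hvc i) i
  refine ⟨contDiff_Pconv hz hv hvc, isBigO_one_Pconv hs hz hvb.isBigO_one, fun i => ?_,
    fun i => ?_⟩
  · exact hpd i ▸ isBigO_one_Pconv hs hz (hvb.isBigO_one_pd i)
  · rw [hpd i, hpd₂ i]
    exact isBigO_one_Pconv hs hz (hvb.isBigO_one_pd_pd i)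

lemma pd_sub_const_sq (hf : Differentiable ℝ f) (c : ℝ) (i : Fin n) :
    pd i (fun y => (f y - c) ^ 2) = fun y => 2 * ((f y - c) * pd i f y) := by
  have hd : Differentiable ℝ fun y => f y - c := hf.sub_const c
  simp only [sq, pd_mul hd hd, pd_sub_const, two_mul]

lemma pd_pd_sub_const_sq (hf : ContDiff ℝ 2 f) (c : ℝ) (i : Fin n) :
    pd i (pd i fun y => (f y - c) ^ 2)
      = fun y => 2 * (pd i f y ^ 2 + (f y - c) * pd i (pd i f) y) := by
  have hd := hf.differentiable two_ne_zero
  have hd' := (contDiff_pd_of_two hf i).differentiable one_ne_zero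
  rw [pd_sub_const_sq hd, pd_const_mul, pd_mul (hd.sub_const c) hd', pd_sub_const]
  ext y
  ring

lemma lapX_sub_const_sq (hf : ContDiff ℝ 2 f) (c : ℝ) (y : En n) :
    lapX (fun y => (f y - c) ^ 2) y = 2 * (∑ i, pd i f y ^ 2 + (f y - c) * lapX f y) := by
  simp only [lapX, pd_pd_sub_const_sq hf, Finset.mul_sum, Finset.sum_add_distrib, mul_add]

lemma IsBddC2.sub_const_sq (hf : IsBddC2 f) (c : ℝ) : IsBddC2 fun y => (f y - c) ^ 2 := by
  have hc : (fun y => f y - c) =O[⊤] (1 : En n → ℝ) :=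
    hf.isBigO_one.sub (isBigO_const_const c one_ne_zero _)
  refine ⟨(hf.contDiff.sub contDiff_const).pow 2, isBigO_one_sq hc, fun i => ?_, fun i => ?_⟩
  · rw [pd_sub_const_sq (hf.contDiff.differentiable two_ne_zero)]
    exact (isBigO_one_mul hc (hf.isBigO_one_pd i)).const_mul_left 2
  · rw [pd_pd_sub_const_sq hf.contDiff]
    exact ((isBigO_one_sq (hf.isBigO_one_pd i)).add
      (isBigO_one_mul hc (hf.isBigO_one_pd_pd i))).const_mul_left 2

lemma integral_comp_sub_mul_pd {x : En n} {i : Fin n} (hk : ContDiff ℝ 1 k) (hf : ContDiff ℝ 1 f)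
    (hkf : Integrable fun y => k (x - y) * f y)
    (hkf' : Integrable fun y => k (x - y) * pd i f y)
    (hk'f : Integrable fun y => pd i k (x - y) * f y) :
    ∫ y, k (x - y) * pd i f y = ∫ y, pd i k (x - y) * f y := by
  have hkd := hk.differentiable one_ne_zero
  have hpd (y : En n) :
      fderiv ℝ (fun y => k (x - y)) y (EuclideanSpace.single i 1) = -pd i k (x - y) :=
    congrFun (pd_comp_sub_left hkd i x) y
  have hibp := integral_mul_fderiv_eq_neg_fderiv_mul_of_integrable (μ := volume)
    (f := fun y => k (x - y)) (g := f) (v := EuclideanSpace.single i 1)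
    (by simpa only [hpd, neg_mul] using hk'f.fun_neg) hkf' hkf
    (fun y _ => by fun_prop) (fun y _ => hf.differentiable one_ne_zero y)
  simpa only [hpd, neg_mul, integral_neg, neg_neg, pd] using hibp

lemma integral_Pker_mul_pd_pd (hs : 0 < s) (hz : 0 < z) (hf : IsBddC2 f) (i : Fin n) (x : En n) :
    ∫ y, Pker n s z (x - y) * pd i (pd i f) y = ∫ y, pd i (pd i (Pker n s z)) (x - y) * f y := by
  have hP : ContDiff ℝ 2 (Pker n s z) := contDiff_Pker hz
  have hP' := contDiff_pd_of_two hP i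
  have hf' := contDiff_pd_of_two hf.contDiff i
  have int_pd {g : En n → ℝ} (hg : Continuous g) (hgb : g =O[⊤] (1 : En n → ℝ)) :
      Integrable fun y => pd i (Pker n s z) (x - y) * g y :=
    integrable_mul_of_abs_le_Pker hs hz hP'.continuous (abs_pd_Pker_le hs hz i) hg hgb x
  have int_pd_pd : Integrable fun y => pd i (pd i (Pker n s z)) (x - y) * f y :=
    integrable_mul_of_abs_le_Pker hs hz (continuous_pd_pd hP i) (abs_pd_pd_Pker_le hs hz i)
      hf.contDiff.continuous hf.isBigO_one x
  rw [integral_comp_sub_mul_pd (contDiff_Pker hz) hf'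
      (integrable_Pker_mul hs hz hf'.continuous (hf.isBigO_one_pd i) x)
      (integrable_Pker_mul hs hz (continuous_pd_pd hf.contDiff i) (hf.isBigO_one_pd_pd i) x)
      (int_pd hf'.continuous (hf.isBigO_one_pd i)),
    integral_comp_sub_mul_pd hP' (hf.contDiff.of_le one_le_two)
      (int_pd hf.contDiff.continuous hf.isBigO_one) (int_pd hf'.continuous (hf.isBigO_one_pd i))
      int_pd_pd]

lemma Pconv_lapX (hs : 0 < s) (hz : 0 < z) (hf : IsBddC2 f) (x : En n) :
    Pconv n s z (lapX f) x = ∫ y, lapX (Pker n s z) (x - y) * f y := by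
  simp only [Pconv, lapX, Finset.mul_sum, Finset.sum_mul]
  rw [integral_finsetSum _ fun i _ =>
      integrable_Pker_mul hs hz (continuous_pd_pd hf.contDiff i) (hf.isBigO_one_pd_pd i) x,
    integral_finsetSum _ fun i _ =>
      integrable_mul_of_abs_le_Pker hs hz (continuous_pd_pd (contDiff_Pker hz) i)
        (abs_pd_pd_Pker_le hs hz i) hf.contDiff.continuous hf.isBigO_one x]
  simp only [integral_Pker_mul_pd_pd hs hz hf]

lemma rpow_mul_Pconv_lapX (hs : 0 < s) (hz : 0 < z) (hf : IsBddC2 f) (x : En n) :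
    z ^ (1 - 2 * s) * Pconv n s z (lapX f) x = -∫ y, poissonFluxDeriv n s z (x - y) * f y := by
  rw [Pconv_lapX hs hz hf, ← integral_const_mul, ← integral_neg]
  simp only [← mul_assoc, rpow_mul_lapX_Pker hz, neg_mul]

lemma lapX_Pconv (hs : 0 < s) (hz : 0 < z) (hv : ContDiff ℝ 2 v) (hvc : HasCompactSupport v)
    (x : En n) : lapX (Pconv n s z v) x = Pconv n s z (lapX v) x := by
  have hvb := isBddC2_of_hasCompactSupport hv hvc
  have hpd₂ (i) := pd_Pconv (s := s) hz (contDiff_pd_of_two hv i) (hasCompactSupport_pd hvc i) i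
  simp only [lapX, pd_Pconv hz (hv.of_le one_le_two) hvc, hpd₂, Pconv, Finset.mul_sum]
  exact (integral_finsetSum _ fun i _ =>
    integrable_Pker_mul hs hz (continuous_pd_pd hv i) (hvb.isBigO_one_pd_pd i) x).symm

lemma hasDerivAt_fluxConv (hs : 0 < s) (hz : 0 < z) (hv : ContDiff ℝ 2 v)
    (hvc : HasCompactSupport v) (x : En n) :
    HasDerivAt (fun t => fluxConv n s t v x) (-(z ^ (1 - 2 * s) * lapX (Pconv n s z v) x)) z := by
  have hvb := isBddC2_of_hasCompactSupport hv hvc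
  rw [lapX_Pconv hs hz hv hvc, rpow_mul_Pconv_lapX hs hz hvb, neg_neg]
  exact hasDerivAt_fluxConv_integral hs hz hv.continuous hvb.isBigO_one x

end Green

section LevyWeight

variable {n : ℕ} {s z : ℝ} {v : En n → ℝ}

/-- The density `min(1, |h|²) |h|^{-(n+2s)}`, the integrable majorant of the singular integrals
with kernel `|h|^{-(n+2s)}`. -/
def levyWeight (n : ℕ) (s : ℝ) (h : En n) : ℝ := min 1 (‖h‖ ^ 2) / ‖h‖ ^ ((n : ℝ) + 2 * s)

lemma integrable_levyWeight (hn : 1 ≤ n) (hs0 : 0 < s) (hs1 : s < 1) :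
    Integrable (levyWeight n s) := by
  have : Nonempty (Fin n) := ⟨⟨0, hn⟩⟩
  have hpow (r : ℝ) : r ^ (n - 1) = r ^ ((n : ℝ) - 1) := by
    rw [← Real.rpow_natCast, Nat.cast_sub hn, Nat.cast_one]
  suffices IntegrableOn (fun r : ℝ => r ^ (n - 1) • (min 1 (r ^ 2) / r ^ ((n : ℝ) + 2 * s)))
      (Ioi 0) from (integrable_fun_norm_addHaar (E := En n) volume
        (f := fun r : ℝ => min 1 (r ^ 2) / r ^ ((n : ℝ) + 2 * s))).2
          (by rwa [finrank_euclideanSpace_fin])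
  rw [← Ioc_union_Ioi_eq_Ioi (zero_le_one' ℝ), integrableOn_union]
  constructor
  · have hint : IntegrableOn (fun r : ℝ => r ^ (1 - 2 * s)) (Ioc 0 1) := by
      rw [← intervalIntegrable_iff_integrableOn_Ioc_of_le zero_le_one]
      exact intervalIntegral.intervalIntegrable_rpow' (by linarith)
    refine hint.congr_fun (fun r ⟨hr₀, hr₁⟩ => ?_) measurableSet_Ioc
    simp only [smul_eq_mul]
    rw [min_eq_right (by nlinarith), hpow r, ← Real.rpow_two, ← Real.rpow_sub hr₀,
      ← Real.rpow_add hr₀]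
    congr 1
    ring
  · refine (integrableOn_Ioi_rpow_of_lt (a := -1 - 2 * s) (by linarith) one_pos).congr_fun
      (fun r (hr : 1 < r) => ?_) measurableSet_Ioi
    have hr₀ : 0 < r := one_pos.trans hr
    simp only [smul_eq_mul]
    rw [min_eq_left (by nlinarith), hpow r, ← mul_div_assoc, mul_one, ← Real.rpow_sub hr₀]
    congr 1
    ring

lemma exists_abs_sub_le_mul_min (hv : ContDiff ℝ 1 v) (hvc : HasCompactSupport v) :
    ∃ K, 0 ≤ K ∧ ∀ a b, |v a - v b| ≤ K * min 1 ‖a - b‖ := by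
  obtain ⟨M, hM₀, hM⟩ :=
    exists_abs_le_of_isBigO_one (isBigO_one_of_hasCompactSupport hv.continuous hvc)
  obtain ⟨C, hC⟩ := hv.lipschitzWith_of_hasCompactSupport hvc one_ne_zero
  refine ⟨2 * M + C, by positivity, fun a b => ?_⟩
  rcases le_total 1 ‖a - b‖ with h | h
  · rw [min_eq_left h]
    linarith [abs_sub (v a) (v b), hM a, hM b]
  · have hlip : |v a - v b| ≤ C * ‖a - b‖ := by
      simpa only [dist_eq_norm, Real.norm_eq_abs] using hC.dist_le_mul a b
    rw [min_eq_right h]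
    nlinarith [norm_nonneg (a - b)]

lemma exists_abs_sub_le_mul_rpow {α : ℝ} (hα₀ : 0 ≤ α) (hα₁ : α ≤ 1) (hv : ContDiff ℝ 1 v)
    (hvc : HasCompactSupport v) : ∃ K, 0 ≤ K ∧ ∀ a b, |v a - v b| ≤ K * ‖a - b‖ ^ α := by
  obtain ⟨K, hK, hlip⟩ := exists_abs_sub_le_mul_min hv hvc
  refine ⟨K, hK, fun a b => (hlip a b).trans (mul_le_mul_of_nonneg_left ?_ hK)⟩
  rcases le_total 1 ‖a - b‖ with h | h
  · exact (min_le_left _ _).trans (Real.one_le_rpow h hα₀)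
  · simpa only [min_eq_right h, Real.rpow_one] using
      Real.rpow_le_rpow_of_exponent_ge' (norm_nonneg (a - b)) h hα₀ hα₁

lemma exists_sq_sub_div_le_levyWeight (s : ℝ) (hv : ContDiff ℝ 1 v) (hvc : HasCompactSupport v) :
    ∃ K, 0 ≤ K ∧ ∀ x y,
      (v y - v x) ^ 2 / ‖x - y‖ ^ ((n : ℝ) + 2 * s) ≤ K * levyWeight n s (x - y) := by
  obtain ⟨K, -, hlip⟩ := exists_abs_sub_le_mul_min hv hvc
  refine ⟨K ^ 2, by positivity, fun x y => ?_⟩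
  rw [levyWeight, ← mul_div_assoc]
  gcongr
  have hmin : 0 ≤ min 1 ‖x - y‖ := by positivity
  calc (v y - v x) ^ 2 = |v y - v x| ^ 2 := (sq_abs _).symm
    _ ≤ (K * min 1 ‖x - y‖) ^ 2 := by
      gcongr
      exact norm_sub_rev x y ▸ hlip y x
    _ = K ^ 2 * min 1 ‖x - y‖ ^ 2 := mul_pow _ _ _
    _ ≤ K ^ 2 * min 1 (‖x - y‖ ^ 2) := by
      gcongr
      exact le_min (pow_le_one₀ hmin (min_le_left _ _))
        (pow_le_pow_left₀ hmin (min_le_right _ _) 2)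

/-- The nonlocal energy density `∫ (v(y) - v(x))² |x - y|^{-(n+2s)} dy` of `v` at `x`. -/
def jumpEnergy (n : ℕ) (s : ℝ) (v : En n → ℝ) (x : En n) : ℝ :=
  ∫ y, (v y - v x) ^ 2 / ‖x - y‖ ^ ((n : ℝ) + 2 * s)

lemma integrable_sq_sub_div (hn : 1 ≤ n) (hs0 : 0 < s) (hs1 : s < 1) (hv : ContDiff ℝ 1 v)
    (hvc : HasCompactSupport v) (x : En n) :
    Integrable fun y => (v y - v x) ^ 2 / ‖x - y‖ ^ ((n : ℝ) + 2 * s) := by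
  obtain ⟨K, -, hK⟩ := exists_sq_sub_div_le_levyWeight s hv hvc
  refine (((integrable_levyWeight hn hs0 hs1).comp_sub_left x).const_mul K).mono' ?_
    (Eventually.of_forall fun y => ?_)
  · have := hv.continuous.measurable
    exact Measurable.aestronglyMeasurable (by fun_prop)
  · rw [Real.norm_of_nonneg (by positivity)]
    exact hK x y

lemma tendsto_poissonFlux_nhdsGT_zero {w : En n} (hw : w ≠ 0) :
    Tendsto (fun z => poissonFlux n s z w) (𝓝[>] 0)
      (𝓝 (2 * s * pns n s / ‖w‖ ^ ((n : ℝ) + 2 * s))) := by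
  have hw₀ : 0 < ‖w‖ := norm_pos_iff.2 hw
  have hcont : ContinuousAt (fun z : ℝ => pns n s * (‖w‖ ^ 2 + z ^ 2) ^ (-((n : ℝ) + 2 * s) / 2)
      * (2 * s - (n + 2 * s) * (z ^ 2 / (‖w‖ ^ 2 + z ^ 2)))) 0 := by
    have : ‖w‖ ^ 2 + (0 : ℝ) ^ 2 ≠ 0 := by positivity
    fun_prop (disch := first | exact Or.inl this | exact this)
  have hvalue : (‖w‖ ^ 2) ^ (-((n : ℝ) + 2 * s) / 2) = (‖w‖ ^ ((n : ℝ) + 2 * s))⁻¹ := by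
    rw [← Real.rpow_two, ← Real.rpow_mul hw₀.le, ← Real.rpow_neg hw₀.le]
    congr 1
    ring
  have hlim := hcont.tendsto.mono_left (nhdsWithin_le_nhds (s := Ioi 0))
  simp only [ne_eq, OfNat.ofNat_ne_zero, not_false_eq_true, zero_pow, add_zero, zero_div, mul_zero,
    sub_zero, hvalue] at hlim
  convert hlim.congr' ?_ using 2
  · ring
  · filter_upwards [self_mem_nhdsWithin] with z hz
    rw [poissonFlux, rpow_neg_mul_Pker hz]

lemma tendsto_integral_poissonFlux_nhdsGT_zero (hn : 1 ≤ n) (hs0 : 0 < s) (hs1 : s < 1)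
    (hv : ContDiff ℝ 1 v) (hvc : HasCompactSupport v) (x : En n) :
    Tendsto (fun z => ∫ y, poissonFlux n s z (x - y) * (v y - v x) ^ 2) (𝓝[>] 0)
      (𝓝 (2 * s * pns n s * jumpEnergy n s v x)) := by
  rw [jumpEnergy, ← integral_const_mul]
  refine tendsto_integral_filter_of_dominated_convergence
    (fun y => (n + 2 * s) * pns n s * ((v y - v x) ^ 2 / ‖x - y‖ ^ ((n : ℝ) + 2 * s)))
    ?_ ?_ ((integrable_sq_sub_div hn hs0 hs1 hv hvc x).const_mul _) ?_
  · filter_upwards [self_mem_nhdsWithin] with z hz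
    have := continuous_poissonFlux (n := n) (s := s) hz
    have := hv.continuous
    exact Continuous.aestronglyMeasurable (by fun_prop)
  · filter_upwards [self_mem_nhdsWithin] with z hz
    refine Eventually.of_forall fun y => ?_
    rcases eq_or_ne x y with rfl | hxy
    · simp
    calc ‖poissonFlux n s z (x - y) * (v y - v x) ^ 2‖
        = |poissonFlux n s z (x - y)| * (v y - v x) ^ 2 := by
          rw [norm_mul, norm_pow, Real.norm_eq_abs, Real.norm_eq_abs, sq_abs]
      _ ≤ (n + 2 * s) * (pns n s / ‖x - y‖ ^ ((n : ℝ) + 2 * s)) * (v y - v x) ^ 2 := by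
          gcongr
          refine (abs_poissonFlux_le hs0 hz _).trans ?_
          gcongr
          exact rpow_neg_mul_Pker_le hs0 hz (sub_ne_zero.2 hxy)
      _ = _ := by ring
  · refine Eventually.of_forall fun y => ?_
    rcases eq_or_ne x y with rfl | hxy
    · simp
    convert (tendsto_poissonFlux_nhdsGT_zero (sub_ne_zero.2 hxy)).mul_const ((v y - v x) ^ 2)
      using 2
    ring

end LevyWeight

section EnergyIdentity

variable {n : ℕ} {s z c : ℝ} {v : En n → ℝ}

/-- The squared gradient `|∇_x V|² + (∂_z V)²` of the extension `V` of `v`, at height `z`. -/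
def energyDensity (n : ℕ) (s : ℝ) (v : En n → ℝ) (z : ℝ) (y : En n) : ℝ :=
  ∑ i, pd i (fun y' => CSext n s v y' z) y ^ 2 + deriv (CSext n s v y) z ^ 2

lemma deriv_CSext (hs : 0 < s) (hz : 0 < z) (hv : Continuous v)
    (hvb : v =O[⊤] (1 : En n → ℝ)) (y : En n) :
    deriv (CSext n s v y) z = z ^ (2 * s - 1) * fluxConv n s z v y :=
  (hasDerivAt_Pconv hs hz hv hvb y).deriv

lemma energyDensity_eq (hs : 0 < s) (hz : 0 < z) (hv : ContDiff ℝ 1 v)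
    (hvc : HasCompactSupport v) (y : En n) :
    energyDensity n s v z y = ∑ i, Pconv n s z (pd i v) y ^ 2
      + (z ^ (2 * s - 1) * fluxConv n s z v y) ^ 2 := by
  rw [energyDensity, deriv_CSext hs hz hv.continuous
    (isBigO_one_of_hasCompactSupport hv.continuous hvc)]
  simp only [CSext, ← pd_Pconv hz hv hvc]

lemma isBigO_one_fluxConv (hs : 0 < s) (hz : 0 < z) (hvb : v =O[⊤] (1 : En n → ℝ)) :
    fluxConv n s z v =O[⊤] (1 : En n → ℝ) := by
  obtain ⟨M, -, hM⟩ := exists_abs_le_of_isBigO_one hvb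
  exact isBigO_top.2 ⟨_, fun x => by simpa using abs_fluxConv_le hs hz hM x⟩

lemma integrable_Pker_mul_energyDensity (hs : 0 < s) (hz : 0 < z) (hv : ContDiff ℝ 1 v)
    (hvc : HasCompactSupport v) (x : En n) :
    Integrable fun y => Pker n s z (x - y) * energyDensity n s v z y := by
  have hpd (i) : Continuous (pd i v) := (contDiff_pd (k := 0) hv (by norm_num) i).continuous
  have hN := continuous_fluxConv (s := s) hz hv.continuous hvc
  have hP (i) : Continuous (Pconv n s z (pd i v)) := contDiff_zero.1
    (contDiff_Pconv (m := 0) hz (contDiff_zero.2 (hpd i)) (hasCompactSupport_pd hvc i))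
  simp only [energyDensity_eq hs hz hv hvc]
  refine integrable_Pker_mul hs hz (by fun_prop) (.add (.fun_sum fun i _ => ?_) ?_) x
  · exact isBigO_one_sq (isBigO_one_Pconv hs hz
      (isBigO_one_of_hasCompactSupport (hpd i) (hasCompactSupport_pd hvc i)))
  · exact isBigO_one_sq ((isBigO_one_fluxConv hs hz
      (isBigO_one_of_hasCompactSupport hv.continuous hvc)).const_mul_left _)

/-- The integrand `P ν∂_z(V - c)² - (V - c)² ν∂_z P`, `ν = z^{1-2s}`, of Green's second identity
on the level `z`, where `V` is the extension of `v` and `P` the Poisson kernel centred at `x`. -/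
def greenDensity (n : ℕ) (s : ℝ) (v : En n → ℝ) (c : ℝ) (x : En n) (z : ℝ) (y : En n) : ℝ :=
  Pker n s z (x - y) * (2 * ((Pconv n s z v y - c) * fluxConv n s z v y))
    - poissonFlux n s z (x - y) * (Pconv n s z v y - c) ^ 2

/-- The `z`-derivative of `greenDensity`. -/
def greenDensityDeriv (n : ℕ) (s : ℝ) (v : En n → ℝ) (c : ℝ) (x : En n) (z : ℝ) (y : En n) : ℝ :=
  Pker n s z (x - y) * (2 * (z ^ (2 * s - 1) * fluxConv n s z v y ^ 2
      - z ^ (1 - 2 * s) * ((Pconv n s z v y - c) * lapX (Pconv n s z v) y)))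
    - poissonFluxDeriv n s z (x - y) * (Pconv n s z v y - c) ^ 2

lemma hasDerivAt_greenDensity (hs : 0 < s) (hz : 0 < z) (hv : ContDiff ℝ 2 v)
    (hvc : HasCompactSupport v) (c : ℝ) (x y : En n) :
    HasDerivAt (fun t => greenDensity n s v c x t y) (greenDensityDeriv n s v c x z y) z := by
  have hV := (hasDerivAt_Pconv hs hz hv.continuous
    (isBigO_one_of_hasCompactSupport hv.continuous hvc) y).sub_const c
  have hN := hasDerivAt_fluxConv hs hz hv hvc y
  refine (((hasDerivAt_Pker hz (x - y)).fun_mul ((hV.fun_mul hN).const_mul 2)).fun_sub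
    ((hasDerivAt_poissonFlux hz (x - y)).fun_mul (hV.fun_pow 2))).congr_deriv ?_
  rw [greenDensityDeriv]
  push_cast
  ring

lemma isBigO_one_Pconv_sub_const (hs : 0 < s) (hz : 0 < z) (hvb : v =O[⊤] (1 : En n → ℝ)) (c : ℝ) :
    (fun y => Pconv n s z v y - c) =O[⊤] (1 : En n → ℝ) :=
  (isBigO_one_Pconv hs hz hvb).sub (isBigO_const_const c one_ne_zero _)

lemma integrable_greenDensity (hs : 0 < s) (hz : 0 < z) (hv : Continuous v)
    (hvc : HasCompactSupport v) (c : ℝ) (x : En n) : Integrable (greenDensity n s v c x z) := by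
  have hvb := isBigO_one_of_hasCompactSupport hv hvc
  have hV : Continuous (Pconv n s z v) :=
    contDiff_zero.1 (contDiff_Pconv (m := 0) hz (contDiff_zero.2 hv) hvc)
  have hN := continuous_fluxConv (s := s) hz hv hvc
  have hVb := isBigO_one_Pconv_sub_const hs hz hvb c
  exact (integrable_Pker_mul hs hz (by fun_prop)
    ((isBigO_one_mul hVb (isBigO_one_fluxConv hs hz hvb)).const_mul_left 2) x).sub
    (integrable_poissonFlux_mul hs hz (by fun_prop) (isBigO_one_sq hVb) x)

lemma greenDensityDeriv_eq (hs : 0 < s) (hz : 0 < z) (hv : ContDiff ℝ 2 v)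
    (hvc : HasCompactSupport v) (c : ℝ) (x y : En n) :
    greenDensityDeriv n s v c x z y
      = 2 * z ^ (1 - 2 * s) * (Pker n s z (x - y) * energyDensity n s v z y)
        - z ^ (1 - 2 * s) * (Pker n s z (x - y) * lapX (fun y => (Pconv n s z v y - c) ^ 2) y)
        - poissonFluxDeriv n s z (x - y) * (Pconv n s z v y - c) ^ 2 := by
  have hpow : z ^ (2 * s - 1) = z ^ (1 - 2 * s) * (z ^ (2 * s - 1)) ^ 2 := by
    rw [sq, ← mul_assoc, ← Real.rpow_add hz, sub_add_sub_cancel, sub_self, Real.rpow_zero, one_mul]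
  have hv₁ : ContDiff ℝ 1 v := hv.of_le one_le_two
  rw [greenDensityDeriv, lapX_sub_const_sq (contDiff_Pconv (m := 2) hz hv hvc),
    energyDensity_eq hs hz hv₁ hvc]
  simp only [pd_Pconv hz hv₁ hvc]
  linear_combination 2 * Pker n s z (x - y) * fluxConv n s z v y ^ 2 * hpow

lemma integral_greenDensityDeriv (hs : 0 < s) (hz : 0 < z) (hv : ContDiff ℝ 2 v)
    (hvc : HasCompactSupport v) (c : ℝ) (x : En n) :
    ∫ y, greenDensityDeriv n s v c x z y
      = 2 * (Pconv n s z (energyDensity n s v z) x * z ^ (1 - 2 * s)) := by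
  have hVc := (isBddC2_Pconv hs hz hv hvc).sub_const_sq c
  have int_energy := (integrable_Pker_mul_energyDensity hs hz (hv.of_le one_le_two) hvc x).const_mul
    (2 * z ^ (1 - 2 * s))
  have int_lapX := (integrable_Pker_mul hs hz hVc.continuous_lapX hVc.isBigO_one_lapX x).const_mul
    (z ^ (1 - 2 * s))
  have int_flux := integrable_poissonFluxDeriv_mul hs hz hVc.contDiff.continuous hVc.isBigO_one x
  have hgreen := rpow_mul_Pconv_lapX hs hz hVc x
  simp only [greenDensityDeriv_eq hs hz hv hvc]
  rw [integral_sub (by exact int_energy.sub int_lapX) int_flux, integral_sub int_energy int_lapX,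
    integral_const_mul, integral_const_mul]
  simp only [Pconv] at hgreen ⊢
  linear_combination -hgreen

lemma abs_greenDensityDeriv_le (hs : 0 < s) (hz : 0 < z) (hv : ContDiff ℝ 2 v)
    (hvc : HasCompactSupport v) {M M₂ : ℝ} (hM : ∀ y, |v y| ≤ M) (hM₂ : ∀ y, |lapX v y| ≤ M₂)
    (c : ℝ) (x y : En n) :
    |greenDensityDeriv n s v c x z y|
      ≤ (2 * (z ^ (2 * s - 1) * ((n + 2 * s) * M * z ^ (-2 * s)) ^ 2
          + z ^ (1 - 2 * s) * ((M + |c|) * M₂))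
        + (n + 2 * s) * (n + 2 * s + 2) * z ^ (-2 * s - 1) * (M + |c|) ^ 2)
        * Pker n s z (x - y) := by
  have hP := Pker_pos hs hz (x - y)
  have hV : |Pconv n s z v y - c| ≤ M + |c| :=
    (abs_sub _ _).trans (add_le_add_left (abs_Pconv_le hs hz hM y) _)
  have hN := abs_fluxConv_le hs hz hM y
  have hL : |lapX (Pconv n s z v) y| ≤ M₂ :=
    lapX_Pconv hs hz hv hvc y ▸ abs_Pconv_le hs hz hM₂ y
  have hψ := abs_poissonFluxDeriv_le hs hz (x - y)
  rw [greenDensityDeriv]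
  refine (abs_sub _ _).trans ?_
  rw [abs_mul, abs_mul, abs_mul, abs_of_pos hP, abs_two, abs_pow]
  calc _ ≤ Pker n s z (x - y) * (2 * (z ^ (2 * s - 1) * ((n + 2 * s) * M * z ^ (-2 * s)) ^ 2
            + z ^ (1 - 2 * s) * ((M + |c|) * M₂)))
          + (n + 2 * s) * (n + 2 * s + 2) * (z ^ (-2 * s - 1) * Pker n s z (x - y))
            * (M + |c|) ^ 2 := by
        gcongr
        · refine (abs_sub _ _).trans ?_
          rw [abs_mul, abs_mul, abs_mul, abs_pow, abs_of_pos (Real.rpow_pos_of_pos hz _),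
            abs_of_pos (Real.rpow_pos_of_pos hz _)]
          gcongr
          exact (abs_nonneg _).trans hV
    _ = _ := by ring

/-- The boundary term of Green's second identity on the level `z`. -/
def greenIntegral (n : ℕ) (s : ℝ) (v : En n → ℝ) (c : ℝ) (x : En n) (z : ℝ) : ℝ :=
  ∫ y, greenDensity n s v c x z y

lemma hasDerivAt_greenIntegral (hs : 0 < s) (hz : 0 < z) (hv : ContDiff ℝ 2 v)
    (hvc : HasCompactSupport v) (c : ℝ) (x : En n) :
    HasDerivAt (greenIntegral n s v c x)
      (2 * (Pconv n s z (energyDensity n s v z) x * z ^ (1 - 2 * s))) z := by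
  have hvb := isBddC2_of_hasCompactSupport hv hvc
  obtain ⟨M, -, hM⟩ := exists_abs_le_of_isBigO_one hvb.isBigO_one
  obtain ⟨M₂, -, hM₂⟩ := exists_abs_le_of_isBigO_one hvb.isBigO_one_lapX
  have hV {t : ℝ} (ht : 0 < t) := (isBddC2_Pconv hs ht hv hvc).contDiff.continuous
  have hN {t : ℝ} (ht : 0 < t) := continuous_fluxConv (s := s) ht hv.continuous hvc
  have hP {t : ℝ} (ht : 0 < t) := continuous_Pker (n := n) (s := s) ht
  rw [← integral_greenDensityDeriv hs hz hv hvc c x]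
  refine hasDerivAt_integral_of_abs_le_Pker (φ := fun t => 2 * (t ^ (2 * s - 1)
      * ((n + 2 * s) * M * t ^ (-2 * s)) ^ 2 + t ^ (1 - 2 * s) * ((M + |c|) * M₂))
      + (n + 2 * s) * (n + 2 * s + 2) * t ^ (-2 * s - 1) * (M + |c|) ^ 2) hs hz ?_ ?_
    (integrable_greenDensity hs hz hv.continuous hvc c x) ?_
    (fun t ht y => hasDerivAt_greenDensity hs ht hv hvc c x y)
    (fun t ht y => abs_greenDensityDeriv_le hs ht hv hvc hM hM₂ c x y)
  · fun_prop (disch := exact Or.inl hz.ne')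
  · intro t ht
    have := hV ht
    have := hN ht
    have := hP ht
    have := continuous_poissonFlux (n := n) (s := s) ht
    unfold greenDensity
    fun_prop
  · have := hV hz
    have := hN hz
    have := hP hz
    have := continuous_poissonFluxDeriv (n := n) (s := s) hz
    have := (isBddC2_Pconv hs hz hv hvc).continuous_lapX
    unfold greenDensityDeriv
    fun_prop

end EnergyIdentity

section BoundaryLimits

variable {n : ℕ} {s z α L : ℝ} {v : En n → ℝ}

lemma abs_greenDensity_le (hs : 0 < s) (hz : 0 < z) {M : ℝ} (hM : ∀ y, |v y| ≤ M) (c : ℝ)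
    (x y : En n) :
    |greenDensity n s v c x z y|
      ≤ (n + 2 * s) * (2 * ((M + |c|) * M) + (M + |c|) ^ 2) * z ^ (-2 * s)
        * Pker n s z (x - y) := by
  have hP := Pker_pos hs hz (x - y)
  have hV : |Pconv n s z v y - c| ≤ M + |c| :=
    (abs_sub _ _).trans (add_le_add_left (abs_Pconv_le hs hz hM y) _)
  have hN := abs_fluxConv_le hs hz hM y
  have hφ := abs_poissonFlux_le hs hz (x - y)
  rw [greenDensity]
  refine (abs_sub _ _).trans ?_
  rw [abs_mul, abs_mul, abs_mul, abs_mul, abs_of_pos hP, abs_two, abs_pow]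
  calc _ ≤ Pker n s z (x - y) * (2 * ((M + |c|) * ((n + 2 * s) * M * z ^ (-2 * s))))
          + (n + 2 * s) * (z ^ (-2 * s) * Pker n s z (x - y)) * (M + |c|) ^ 2 := by
        gcongr
        exact (abs_nonneg _).trans hV
    _ = _ := by ring

lemma tendsto_greenIntegral_atTop (hs : 0 < s) (hv : Continuous v) (hvc : HasCompactSupport v)
    (c : ℝ) (x : En n) : Tendsto (greenIntegral n s v c x) atTop (𝓝 0) := by
  obtain ⟨M, -, hM⟩ := exists_abs_le_of_isBigO_one (isBigO_one_of_hasCompactSupport hv hvc)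
  have hlim := (tendsto_rpow_neg_atTop (show 0 < 2 * s by positivity)).const_mul
    ((n + 2 * s) * (2 * ((M + |c|) * M) + (M + |c|) ^ 2))
  rw [mul_zero] at hlim
  refine squeeze_zero_norm' ?_ hlim
  filter_upwards [eventually_gt_atTop 0] with z hz
  rw [← neg_mul]
  exact abs_integral_le_of_abs_le_Pker hs hz (abs_greenDensity_le hs hz hM c x)

lemma Pconv_sub_eq_integral (hs : 0 < s) (hz : 0 < z) (hv : Continuous v)
    (hvb : v =O[⊤] (1 : En n → ℝ)) (y : En n) :
    Pconv n s z v y - v y = ∫ w, Pker n s z (y - w) * (v w - v y) := by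
  simp only [mul_sub]
  rw [integral_sub (integrable_Pker_mul hs hz hv hvb y)
    (((integrable_Pker hs hz).comp_sub_left y).mul_const _), integral_mul_const,
    integral_Pker_sub hs hz, one_mul, Pconv]

lemma fluxConv_eq_integral_sub (hs : 0 < s) (hz : 0 < z) (hv : Continuous v)
    (hvb : v =O[⊤] (1 : En n → ℝ)) (y : En n) :
    fluxConv n s z v y = ∫ w, poissonFlux n s z (y - w) * (v w - v y) := by
  simp only [mul_sub]
  rw [integral_sub (integrable_poissonFlux_mul hs hz hv hvb y)
    (integrable_poissonFlux_mul hs hz continuous_const (isBigO_const_const _ one_ne_zero _) y),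
    integral_mul_const, integral_poissonFlux_sub hs hz, zero_mul, sub_zero, fluxConv]

lemma abs_Pconv_sub_le (hs : 0 < s) (hz : 0 < z) (hα₀ : 0 ≤ α) (hα : α < 2 * s)
    (hv : Continuous v) (hvb : v =O[⊤] (1 : En n → ℝ))
    (hL : ∀ a b, |v a - v b| ≤ L * ‖a - b‖ ^ α) (y : En n) :
    |Pconv n s z v y - v y| ≤ L * (z ^ α * poissonMoment n s α) := by
  rw [Pconv_sub_eq_integral hs hz hv hvb, ← zero_add (L * _)]
  refine abs_integral_le_of_abs_le_Pker_moment hs hz hα₀ hα (x := y) fun w => ?_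
  rw [abs_mul, abs_of_pos (Pker_pos hs hz _), mul_comm, zero_add, norm_sub_rev]
  exact mul_le_mul_of_nonneg_right (hL w y) (Pker_pos hs hz _).le

lemma abs_fluxConv_le_of_holder (hs : 0 < s) (hz : 0 < z) (hα₀ : 0 ≤ α) (hα : α < 2 * s)
    (hv : Continuous v) (hvb : v =O[⊤] (1 : En n → ℝ))
    (hL : ∀ a b, |v a - v b| ≤ L * ‖a - b‖ ^ α) (y : En n) :
    |fluxConv n s z v y|
      ≤ (n + 2 * s) * z ^ (-2 * s) * (L * (z ^ α * poissonMoment n s α)) := by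
  rw [fluxConv_eq_integral_sub hs hz hv hvb, ← mul_assoc _ L, ← zero_add (_ * L * _)]
  refine abs_integral_le_of_abs_le_Pker_moment hs hz hα₀ hα (x := y) fun w => ?_
  have hφ := abs_poissonFlux_le hs hz (y - w)
  rw [abs_mul, zero_add, norm_sub_rev]
  calc _ ≤ (n + 2 * s) * (z ^ (-2 * s) * Pker n s z (y - w)) * (L * ‖w - y‖ ^ α) :=
        mul_le_mul hφ (hL w y) (abs_nonneg _) ((abs_nonneg _).trans hφ)
    _ = _ := by ring

-- Write `V(y) - v(x) = δ + d` with `d = v(y) - v(x)` and `δ = V(y) - v(y)`; only `-d²` times the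
-- flux of `P` survives as `z → 0`.
lemma abs_greenDensity_add_le (hs : 0 < s) (hz : 0 < z) (hL₀ : 0 ≤ L) (hα₀ : 0 ≤ α)
    (hα : α < 2 * s) (hv : Continuous v) (hvb : v =O[⊤] (1 : En n → ℝ))
    (hL : ∀ a b, |v a - v b| ≤ L * ‖a - b‖ ^ α) {A : ℝ}
    (hA : A = L * (z ^ α * poissonMoment n s α)) (x y : En n) :
    |greenDensity n s v (v x) x z y + poissonFlux n s z (x - y) * (v y - v x) ^ 2|
      ≤ ((n + 2 * s) * z ^ (-2 * s) * (3 * A ^ 2)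
          + (n + 2 * s) * z ^ (-2 * s) * (4 * A) * L * ‖x - y‖ ^ α) * Pker n s z (x - y) := by
  have hP := Pker_pos hs hz (x - y)
  have hδ := hA ▸ abs_Pconv_sub_le hs hz hα₀ hα hv hvb hL y
  have hN := hA ▸ abs_fluxConv_le_of_holder hs hz hα₀ hα hv hvb hL y
  have hd : |v y - v x| ≤ L * ‖x - y‖ ^ α := norm_sub_rev x y ▸ hL y x
  have hφ := abs_poissonFlux_le hs hz (x - y)
  have hsplit : greenDensity n s v (v x) x z y + poissonFlux n s z (x - y) * (v y - v x) ^ 2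
      = 2 * (Pker n s z (x - y)
          * (((Pconv n s z v y - v y) + (v y - v x)) * fluxConv n s z v y))
        - poissonFlux n s z (x - y)
          * ((Pconv n s z v y - v y) * ((Pconv n s z v y - v y) + 2 * (v y - v x))) := by
    rw [greenDensity]
    ring
  rw [hsplit]
  set δ := Pconv n s z v y - v y
  set d := v y - v x
  have hA₀ : 0 ≤ A := (abs_nonneg δ).trans hδ
  calc _ ≤ 2 * (Pker n s z (x - y) * ((|δ| + |d|) * |fluxConv n s z v y|))
          + |poissonFlux n s z (x - y)| * (|δ| * (|δ| + 2 * |d|)) := by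
        refine (abs_sub _ _).trans ?_
        simp only [abs_mul, abs_two, abs_of_pos hP]
        gcongr
        · exact abs_add_le _ _
        · exact (abs_add_le _ _).trans_eq (by rw [abs_mul, abs_two])
    _ ≤ 2 * (Pker n s z (x - y)
          * ((A + L * ‖x - y‖ ^ α) * ((n + 2 * s) * z ^ (-2 * s) * A)))
          + (n + 2 * s) * (z ^ (-2 * s) * Pker n s z (x - y))
            * (A * (A + 2 * (L * ‖x - y‖ ^ α))) := by gcongr
    _ = _ := by ring

lemma abs_greenIntegral_add_le (hs : 0 < s) (hz : 0 < z) (hL₀ : 0 ≤ L) (hα₀ : 0 ≤ α)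
    (hα : α < 2 * s) (hv : Continuous v) (hvc : HasCompactSupport v)
    (hL : ∀ a b, |v a - v b| ≤ L * ‖a - b‖ ^ α) (x : En n) :
    |greenIntegral n s v (v x) x z + ∫ y, poissonFlux n s z (x - y) * (v y - v x) ^ 2|
      ≤ 7 * (n + 2 * s) * (L * poissonMoment n s α) ^ 2 * z ^ (2 * α - 2 * s) := by
  have hvb := isBigO_one_of_hasCompactSupport hv hvc
  have hd : (fun y => v y - v x) =O[⊤] (1 : En n → ℝ) :=
    hvb.sub (isBigO_const_const _ one_ne_zero _)
  have hpow : z ^ (2 * α - 2 * s) = z ^ (-2 * s) * (z ^ α) ^ 2 := by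
    rw [sq, ← Real.rpow_add hz, ← Real.rpow_add hz]
    congr 1
    ring
  rw [greenIntegral, ← integral_add (integrable_greenDensity hs hz hv hvc _ x)
    (integrable_poissonFlux_mul hs hz (by fun_prop) (isBigO_one_sq hd) x)]
  refine (abs_integral_le_of_abs_le_Pker_moment hs hz hα₀ hα
    (abs_greenDensity_add_le hs hz hL₀ hα₀ hα hv hvb hL rfl x)).trans_eq ?_
  rw [hpow]
  ring

lemma tendsto_greenIntegral_nhdsGT_zero (hn : 1 ≤ n) (hs0 : 0 < s) (hs1 : s < 1)
    (hv : ContDiff ℝ 1 v) (hvc : HasCompactSupport v) (x : En n) :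
    Tendsto (greenIntegral n s v (v x) x) (𝓝[>] 0)
      (𝓝 (-(2 * s * pns n s * jumpEnergy n s v x))) := by
  obtain ⟨α, hsα, hα⟩ : ∃ α, s < α ∧ α < min 1 (2 * s) := exists_between (lt_min hs1 (by linarith))
  obtain ⟨hα₁, hα₂⟩ := lt_min_iff.1 hα
  have hα₀ : 0 ≤ α := (hs0.trans hsα).le
  obtain ⟨L, hL₀, hL⟩ := exists_abs_sub_le_mul_rpow hα₀ hα₁.le hv hvc
  have herror : Tendsto (fun z => greenIntegral n s v (v x) x z
      + ∫ y, poissonFlux n s z (x - y) * (v y - v x) ^ 2) (𝓝[>] 0) (𝓝 0) := by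
    have hpow : Tendsto (fun z : ℝ => z ^ (2 * α - 2 * s)) (𝓝[>] 0) (𝓝 0) := by
      have hcont : ContinuousAt (fun z : ℝ => z ^ (2 * α - 2 * s)) 0 :=
        continuousAt_id.rpow_const (Or.inr (by linarith))
      simpa [Real.zero_rpow (show 2 * α - 2 * s ≠ 0 by linarith)] using
        hcont.tendsto.mono_left (nhdsWithin_le_nhds (s := Ioi 0))
    have hbound := hpow.const_mul (7 * (n + 2 * s) * (L * poissonMoment n s α) ^ 2)
    rw [mul_zero] at hbound
    refine squeeze_zero_norm' ?_ hbound
    filter_upwards [self_mem_nhdsWithin] with z hz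
    exact abs_greenIntegral_add_le hs0 hz hL₀ hα₀ hα₂ hv.continuous hvc hL x
  simpa using herror.sub (tendsto_integral_poissonFlux_nhdsGT_zero hn hs0 hs1 hv hvc x)

lemma Pconv_energyDensity_nonneg (hs : 0 < s) (hz : 0 < z) (x : En n) :
    0 ≤ Pconv n s z (energyDensity n s v z) x :=
  integral_nonneg fun y => mul_nonneg (Pker_pos hs hz _).le (by unfold energyDensity; positivity)

lemma integrableOn_and_integral_Pconv_energyDensity (hn : 1 ≤ n) (hs0 : 0 < s) (hs1 : s < 1)
    (hv : ContDiff ℝ 2 v) (hvc : HasCompactSupport v) (x : En n) :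
    IntegrableOn (fun z => Pconv n s z (energyDensity n s v z) x * z ^ (1 - 2 * s)) (Ioi 0) ∧
    ∫ z in Ioi 0, Pconv n s z (energyDensity n s v z) x * z ^ (1 - 2 * s)
      = s * pns n s * jumpEnergy n s v x := by
  have hupdate {z : ℝ} (hz : 0 < z) : Function.update (greenIntegral n s v (v x) x) 0
      (-(2 * s * pns n s * jumpEnergy n s v x)) z = greenIntegral n s v (v x) x z :=
    Function.update_of_ne hz.ne' _ _
  set g := Function.update (greenIntegral n s v (v x) x) 0
    (-(2 * s * pns n s * jumpEnergy n s v x)) with hg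
  have hcont : ContinuousWithinAt g (Ici 0) 0 := by
    have hIci : Ici (0 : ℝ) \ {0} = Ioi 0 := by ext t; simp [lt_iff_le_and_ne, eq_comm]
    rw [hg, continuousWithinAt_update_same, hIci]
    exact tendsto_greenIntegral_nhdsGT_zero hn hs0 hs1 (hv.of_le one_le_two) hvc x
  have hderiv : ∀ z ∈ Ioi (0 : ℝ), HasDerivAt g
      (2 * (Pconv n s z (energyDensity n s v z) x * z ^ (1 - 2 * s))) z := fun z hz =>
    (hasDerivAt_greenIntegral hs0 hz hv hvc (v x) x).congr_of_eventuallyEq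
      (by filter_upwards [lt_mem_nhds hz] with t ht using hupdate ht)
  have hnonneg : ∀ z ∈ Ioi (0 : ℝ),
      0 ≤ 2 * (Pconv n s z (energyDensity n s v z) x * z ^ (1 - 2 * s)) := fun z hz =>
    mul_nonneg zero_le_two (mul_nonneg (Pconv_energyDensity_nonneg hs0 hz x)
      (Real.rpow_nonneg (le_of_lt hz) _))
  have htop : Tendsto g atTop (𝓝 0) :=
    (tendsto_greenIntegral_atTop hs0 hv.continuous hvc (v x) x).congr'
      (by filter_upwards [eventually_gt_atTop 0] with t ht using (hupdate ht).symm)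
  constructor
  · simpa only [IntegrableOn, integrable_const_mul_iff (isUnit_iff_ne_zero.2 (two_ne_zero' ℝ))]
      using integrableOn_Ioi_deriv_of_nonneg hcont hderiv hnonneg htop
  · have hftc := integral_Ioi_of_hasDerivAt_of_nonneg hcont hderiv hnonneg htop
    rw [integral_const_mul, hg, Function.update_self] at hftc
    linarith

end BoundaryLimits

section SingularIntegral

variable {n : ℕ} {s : ℝ} {v : En n → ℝ} {F : Type*} [NormedAddCommGroup F]
  {f : En n → F}

/-- The symmetric second difference `2 f(x) - f(x + h) - f(x - h)`, in which the first-order term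
of the Taylor expansion of `f` cancels. -/
def secondDiff (f : En n → F) (x h : En n) : F := (f x - f (x + h)) + (f x - f (x - h))

lemma continuous_secondDiff (hf : Continuous f) (x : En n) : Continuous (secondDiff f x) := by
  unfold secondDiff
  fun_prop

variable [NormedSpace ℝ F]

lemma exists_norm_sub_sub_fderiv_le (hf : ContDiff ℝ 2 f) (hfc : HasCompactSupport f) :
    ∃ C, 0 ≤ C ∧ ∀ x h, ‖f (x + h) - f x - fderiv ℝ f x h‖ ≤ C * ‖h‖ ^ 2 := by
  have hf' : ContDiff ℝ 1 (fderiv ℝ f) := hf.fderiv_right le_rfl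
  obtain ⟨C, hC⟩ := hf'.lipschitzWith_of_hasCompactSupport (hfc.fderiv ℝ) one_ne_zero
  have hdiff : Differentiable ℝ f := hf.differentiable two_ne_zero
  refine ⟨C, C.2, fun x h => ?_⟩
  have hfderiv : ∀ y ∈ Metric.closedBall x ‖h‖, ‖fderiv ℝ f y - fderiv ℝ f x‖ ≤ C * ‖h‖ := by
    intro y hy
    rw [← dist_eq_norm]
    exact (hC.dist_le_mul y x).trans (mul_le_mul_of_nonneg_left hy C.2)
  have hmean := (convex_closedBall x ‖h‖).norm_image_sub_le_of_norm_fderiv_le'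
    (fun y _ => hdiff y) hfderiv (x := x) (y := x + h) (by simp) (by simp)
  simpa only [add_sub_cancel_left, sq, mul_assoc] using hmean

lemma exists_norm_secondDiff_le (hf : ContDiff ℝ 2 f) (hfc : HasCompactSupport f) :
    ∃ K, ∀ x h, ‖secondDiff f x h‖ ≤ K * min 1 (‖h‖ ^ 2) := by
  obtain ⟨M, hM⟩ := hfc.exists_bound_of_continuous hf.continuous
  obtain ⟨C, hC₀, hC⟩ := exists_norm_sub_sub_fderiv_le hf hfc
  have hM₀ : 0 ≤ M := (norm_nonneg _).trans (hM 0)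
  refine ⟨4 * M + 2 * C, fun x h => ?_⟩
  rcases le_total 1 (‖h‖ ^ 2) with hh | hh
  · rw [min_eq_left hh, secondDiff]
    have hadd := norm_sub_le (f x) (f (x + h))
    have hsub := norm_sub_le (f x) (f (x - h))
    linarith [norm_add_le (f x - f (x + h)) (f x - f (x - h)), hM x, hM (x + h), hM (x - h)]
  · have htaylor : secondDiff f x h =
        -((f (x + h) - f x - fderiv ℝ f x h) + (f (x + -h) - f x - fderiv ℝ f x (-h))) := by
      rw [secondDiff, map_neg, ← sub_eq_add_neg]
      abel
    rw [min_eq_right hh, htaylor, norm_neg]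
    refine (norm_add_le _ _).trans ?_
    have hneg := hC x (-h)
    rw [norm_neg h] at hneg
    nlinarith [hC x h, sq_nonneg ‖h‖]

/-- The symmetrized singular integral `∫ (2 f(x) - f(x + h) - f(x - h)) |h|^{-(n+2s)} dh`. Vector
values are allowed so that it applies to the Fréchet derivative of a function as well. -/
def levyIntegral (n : ℕ) (s : ℝ) (f : En n → F) (x : En n) : F :=
  ∫ h, (‖h‖ ^ ((n : ℝ) + 2 * s))⁻¹ • secondDiff f x h

lemma aestronglyMeasurable_smul_secondDiff (hf : Continuous f) (x : En n) :
    AEStronglyMeasurable fun h => (‖h‖ ^ ((n : ℝ) + 2 * s))⁻¹ • secondDiff f x h :=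
  (measurable_norm.pow_const _).inv.aestronglyMeasurable.smul
    (continuous_secondDiff hf x).aestronglyMeasurable

lemma exists_norm_smul_secondDiff_le (s : ℝ) (hf : ContDiff ℝ 2 f) (hfc : HasCompactSupport f) :
    ∃ K, ∀ x h : En n,
      ‖(‖h‖ ^ ((n : ℝ) + 2 * s))⁻¹ • secondDiff f x h‖ ≤ K * levyWeight n s h := by
  obtain ⟨K, hK⟩ := exists_norm_secondDiff_le hf hfc
  refine ⟨K, fun x h => ?_⟩
  rw [norm_smul, Real.norm_of_nonneg (by positivity), levyWeight, ← mul_div_assoc, div_eq_inv_mul]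
  exact mul_le_mul_of_nonneg_left (hK x h) (by positivity)

lemma integrable_smul_secondDiff (hn : 1 ≤ n) (hs0 : 0 < s) (hs1 : s < 1) (hf : ContDiff ℝ 2 f)
    (hfc : HasCompactSupport f) (x : En n) :
    Integrable fun h => (‖h‖ ^ ((n : ℝ) + 2 * s))⁻¹ • secondDiff f x h := by
  obtain ⟨K, hK⟩ := exists_norm_smul_secondDiff_le s hf hfc
  exact ((integrable_levyWeight hn hs0 hs1).const_mul K).mono'
    (aestronglyMeasurable_smul_secondDiff hf.continuous x) (Eventually.of_forall (hK x))

lemma levyIntegral_finsetSum {ι : Type*} (t : Finset ι) {g : ι → En n → F} (hn : 1 ≤ n)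
    (hs0 : 0 < s) (hs1 : s < 1) (hg : ∀ i ∈ t, ContDiff ℝ 2 (g i))
    (hgc : ∀ i ∈ t, HasCompactSupport (g i)) (x : En n) :
    levyIntegral n s (fun y => ∑ i ∈ t, g i y) x = ∑ i ∈ t, levyIntegral n s (g i) x := by
  simp only [levyIntegral]
  rw [← integral_finsetSum t fun i hi =>
    integrable_smul_secondDiff hn hs0 hs1 (hg i hi) (hgc i hi) x]
  simp only [secondDiff, ← Finset.sum_sub_distrib, ← Finset.sum_add_distrib, Finset.smul_sum]

lemma hasFDerivAt_secondDiff (hf : Differentiable ℝ f) (x h : En n) :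
    HasFDerivAt (fun y => secondDiff f y h) (secondDiff (fderiv ℝ f) x h) x := by
  have hmid := (hf x).hasFDerivAt
  have hadd := (hasFDerivAt_comp_add_right h).2 (hf (x + h)).hasFDerivAt
  have hsub := (hasFDerivAt_comp_sub h).2 (hf (x - h)).hasFDerivAt
  exact (hmid.fun_sub hadd).fun_add (hmid.fun_sub hsub)

lemma hasFDerivAt_levyIntegral (hn : 1 ≤ n) (hs0 : 0 < s) (hs1 : s < 1) (hf : ContDiff ℝ 3 f)
    (hfc : HasCompactSupport f) (x : En n) :
    HasFDerivAt (levyIntegral n s f) (levyIntegral n s (fderiv ℝ f) x) x := by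
  have hf₂ : ContDiff ℝ 2 f := hf.of_le (by norm_num)
  have hf' : ContDiff ℝ 2 (fderiv ℝ f) := hf.fderiv_right (by norm_num)
  obtain ⟨K, hK⟩ := exists_norm_smul_secondDiff_le s hf' (hfc.fderiv ℝ)
  exact hasFDerivAt_integral_of_dominated_of_fderiv_le univ_mem
    (Eventually.of_forall fun y => aestronglyMeasurable_smul_secondDiff hf.continuous y)
    (integrable_smul_secondDiff hn hs0 hs1 hf₂ hfc x)
    (aestronglyMeasurable_smul_secondDiff hf'.continuous x)
    (Eventually.of_forall fun h y _ => hK y h) ((integrable_levyWeight hn hs0 hs1).const_mul K)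
    (Eventually.of_forall fun h y _ =>
      (hasFDerivAt_secondDiff (hf.differentiable three_ne_zero) y h).const_smul _)

lemma pd_levyIntegral (hn : 1 ≤ n) (hs0 : 0 < s) (hs1 : s < 1) (hv : ContDiff ℝ 3 v)
    (hvc : HasCompactSupport v) (i : Fin n) :
    pd i (levyIntegral n s v) = levyIntegral n s (pd i v) := by
  have hv' : ContDiff ℝ 2 (fderiv ℝ v) := hv.fderiv_right (by norm_num)
  funext x
  rw [pd, (hasFDerivAt_levyIntegral hn hs0 hs1 hv hvc x).fderiv, levyIntegral,
    ContinuousLinearMap.integral_apply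
      (integrable_smul_secondDiff hn hs0 hs1 hv' (hvc.fderiv ℝ) x)]
  rfl

lemma integrableOn_inv_norm_rpow (hs : 0 < s) {ε : ℝ} (hε : 0 < ε) :
    IntegrableOn (fun h : En n => (‖h‖ ^ ((n : ℝ) + 2 * s))⁻¹) {h | ε < ‖h‖} := by
  have hint : Integrable fun h : En n => (1 + ‖h‖) ^ (-((n : ℝ) + 2 * s)) :=
    integrable_one_add_norm (by rw [finrank_euclideanSpace_fin]; linarith)
  refine (hint.integrableOn.const_mul ((1 + ε⁻¹) ^ ((n : ℝ) + 2 * s))).mono'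
    (measurable_norm.pow_const _).inv.aestronglyMeasurable ?_
  refine (ae_restrict_iff' (measurableSet_lt measurable_const measurable_norm)).2
    (Eventually.of_forall fun h (hh : ε < ‖h‖) => ?_)
  have hnorm : 0 < ‖h‖ := hε.trans hh
  have hle : 1 + ‖h‖ ≤ (1 + ε⁻¹) * ‖h‖ := by
    rw [add_mul, one_mul, add_comm, inv_mul_eq_div]
    gcongr
    exact (one_le_div hε).2 hh.le
  rw [Real.norm_of_nonneg (by positivity), Real.rpow_neg (by positivity), ← div_eq_mul_inv,
    inv_eq_one_div, div_le_div_iff₀ (by positivity) (by positivity), one_mul,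
    ← Real.mul_rpow (by positivity) hnorm.le]
  gcongr

lemma integrableOn_sub_div_norm_rpow (hs : 0 < s) (hv : Continuous v) (hvc : HasCompactSupport v)
    {g : En n → En n} (hg : Continuous g) (x : En n) {ε : ℝ} (hε : 0 < ε) :
    IntegrableOn (fun h => (v x - v (g h)) / ‖h‖ ^ ((n : ℝ) + 2 * s)) {h | ε < ‖h‖} := by
  obtain ⟨M, hM⟩ := hvc.exists_bound_of_continuous hv
  simp only [div_eq_mul_inv]
  refine (integrableOn_inv_norm_rpow hs hε).bdd_mul (c := M + M)
    (by fun_prop : Continuous fun h => v x - v (g h)).aestronglyMeasurable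
    (Eventually.of_forall fun h => ?_)
  exact (norm_sub_le _ _).trans (add_le_add (hM _) (hM _))

lemma setIntegral_sub_div_norm_rpow (hs : 0 < s) (hv : Continuous v) (hvc : HasCompactSupport v)
    (x : En n) {ε : ℝ} (hε : 0 < ε) :
    ∫ y in {y | ε < ‖x - y‖}, (v x - v y) / ‖x - y‖ ^ ((n : ℝ) + 2 * s) =
      (1 / 2) * ∫ h in {h | ε < ‖h‖}, (‖h‖ ^ ((n : ℝ) + 2 * s))⁻¹ • secondDiff v x h := by
  have hsub : ∫ y in {y | ε < ‖x - y‖}, (v x - v y) / ‖x - y‖ ^ ((n : ℝ) + 2 * s) =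
      ∫ h in {h | ε < ‖h‖}, (v x - v (x - h)) / ‖h‖ ^ ((n : ℝ) + 2 * s) := by
    rw [← (Measure.measurePreserving_sub_left volume x).setIntegral_preimage_emb
      (MeasurableEquiv.subLeft x).measurableEmbedding _ {h | ε < ‖h‖}]
    simp only [sub_sub_cancel, preimage_ofPred_eq]
  have hadd : ∫ y in {y | ε < ‖x - y‖}, (v x - v y) / ‖x - y‖ ^ ((n : ℝ) + 2 * s) =
      ∫ h in {h | ε < ‖h‖}, (v x - v (x + h)) / ‖h‖ ^ ((n : ℝ) + 2 * s) := by
    rw [← (measurePreserving_add_left volume x).setIntegral_preimage_emb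
      (MeasurableEquiv.addLeft x).measurableEmbedding _ {y | ε < ‖x - y‖}]
    simp only [sub_add_cancel_left, norm_neg, preimage_ofPred_eq]
  have hint (g : En n → En n) (hg : Continuous g) :=
    integrableOn_sub_div_norm_rpow hs hv hvc hg x hε
  have hsum : ∫ h in {h | ε < ‖h‖}, (‖h‖ ^ ((n : ℝ) + 2 * s))⁻¹ • secondDiff v x h =
      (∫ h in {h | ε < ‖h‖}, (v x - v (x + h)) / ‖h‖ ^ ((n : ℝ) + 2 * s)) +
        ∫ h in {h | ε < ‖h‖}, (v x - v (x - h)) / ‖h‖ ^ ((n : ℝ) + 2 * s) := by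
    rw [← integral_add (hint _ (by fun_prop)) (hint _ (by fun_prop))]
    simp only [secondDiff, smul_eq_mul, ← add_div, inv_mul_eq_div]
  rw [hsum, ← hadd, ← hsub]
  ring

lemma tendsto_setIntegral_smul_secondDiff (hn : 1 ≤ n) (hs0 : 0 < s) (hs1 : s < 1)
    (hf : ContDiff ℝ 2 f) (hfc : HasCompactSupport f) (x : En n) :
    Tendsto (fun ε : ℝ => ∫ h in {h | ε < ‖h‖}, (‖h‖ ^ ((n : ℝ) + 2 * s))⁻¹ • secondDiff f x h)
      (𝓝[>] 0) (𝓝 (levyIntegral n s f x)) := by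
  have hmeas (ε : ℝ) : MeasurableSet {h : En n | ε < ‖h‖} :=
    measurableSet_lt measurable_const measurable_norm
  simp only [levyIntegral, ← integral_indicator (hmeas _)]
  refine tendsto_integral_filter_of_dominated_convergence _
    (Eventually.of_forall fun ε =>
      (aestronglyMeasurable_smul_secondDiff hf.continuous x).indicator (hmeas ε))
    (Eventually.of_forall fun ε => Eventually.of_forall fun h => norm_indicator_le_norm_self _ _)
    (integrable_smul_secondDiff hn hs0 hs1 hf hfc x).norm (Eventually.of_forall fun h => ?_)
  rcases eq_or_ne h 0 with rfl | hh
  · simp [secondDiff, indicator]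
  · refine tendsto_const_nhds.congr' ?_
    filter_upwards [mem_nhdsWithin_of_mem_nhds (gt_mem_nhds (norm_pos_iff.2 hh))] with ε hε
    rw [indicator_of_mem (show h ∈ {h | ε < ‖h‖} from hε)]

lemma Lam_eq_levyIntegral (hn : 1 ≤ n) (hs0 : 0 < s) (hs1 : s < 1) (hv : ContDiff ℝ 2 v)
    (hvc : HasCompactSupport v) : Lam n s v = fun x => -(Cns n s / 2) * levyIntegral n s v x := by
  funext x
  have hlim : Tendsto (fun ε : ℝ => ∫ y in {y | ε < ‖x - y‖},
      (v x - v y) / ‖x - y‖ ^ ((n : ℝ) + 2 * s)) (𝓝[>] 0) (𝓝 ((1 / 2) * levyIntegral n s v x)) := by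
    refine ((tendsto_setIntegral_smul_secondDiff hn hs0 hs1 hv hvc x).const_mul (1 / 2)).congr' ?_
    filter_upwards [self_mem_nhdsWithin] with ε hε
    exact (setIntegral_sub_div_norm_rpow hs0 hv.continuous hvc x hε).symm
  rw [Lam, fracLap, hlim.limUnder_eq]
  ring

lemma pd_Lam (hn : 1 ≤ n) (hs0 : 0 < s) (hs1 : s < 1) (hv : ContDiff ℝ 3 v)
    (hvc : HasCompactSupport v) (i : Fin n) : pd i (Lam n s v) = Lam n s (pd i v) := by
  rw [Lam_eq_levyIntegral hn hs0 hs1 (hv.of_le (by norm_num)) hvc, pd_const_mul,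
    pd_levyIntegral hn hs0 hs1 hv hvc, Lam_eq_levyIntegral hn hs0 hs1
      (contDiff_pd hv (by norm_num) i) (hasCompactSupport_pd hvc i)]

lemma Lam_finsetSum {ι : Type*} (t : Finset ι) {g : ι → En n → ℝ} (hn : 1 ≤ n)
    (hs0 : 0 < s) (hs1 : s < 1) (hg : ∀ i ∈ t, ContDiff ℝ 2 (g i))
    (hgc : ∀ i ∈ t, HasCompactSupport (g i)) (x : En n) :
    Lam n s (fun y => ∑ i ∈ t, g i y) x = ∑ i ∈ t, Lam n s (g i) x := by
  have hgc' : HasCompactSupport fun y => ∑ i ∈ t, g i y :=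
    .of_support_subset_isCompact (t.isCompact_biUnion fun i hi => hgc i hi)
      ((Finset.support_sum t g).trans (iUnion₂_mono fun i _ => subset_closure))
  rw [Lam_eq_levyIntegral hn hs0 hs1 (ContDiff.sum hg) hgc',
    Finset.sum_congr rfl fun i hi => by rw [Lam_eq_levyIntegral hn hs0 hs1 (hg i hi) (hgc i hi)]]
  simp only [levyIntegral_finsetSum t hn hs0 hs1 hg hgc, Finset.mul_sum]

lemma two_mul_jumpEnergy (hn : 1 ≤ n) (hs0 : 0 < s) (hs1 : s < 1) (hv : ContDiff ℝ 1 v)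
    (hvc : HasCompactSupport v) (x : En n) :
    2 * jumpEnergy n s v x =
      ∫ h, (‖h‖ ^ ((n : ℝ) + 2 * s))⁻¹ * ((v (x + h) - v x) ^ 2 + (v (x - h) - v x) ^ 2) := by
  have hint := integrable_sq_sub_div hn hs0 hs1 hv hvc x
  have hadd := hint.comp_add_left x
  have hsub := hint.comp_sub_left x
  have headd := integral_add_left_eq_self
    (fun y => (v y - v x) ^ 2 / ‖x - y‖ ^ ((n : ℝ) + 2 * s)) (μ := volume) x
  have hesub := integral_sub_left_eq_self
    (fun y => (v y - v x) ^ 2 / ‖x - y‖ ^ ((n : ℝ) + 2 * s)) volume x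
  simp only [sub_add_cancel_left, norm_neg, sub_sub_cancel] at hadd hsub headd hesub
  simp only [inv_mul_eq_div, add_div]
  rw [integral_add hadd hsub, headd, hesub, ← jumpEnergy]
  ring

lemma Gamma1_self (hn : 1 ≤ n) (hs0 : 0 < s) (hs1 : s < 1) (hv : ContDiff ℝ 2 v)
    (hvc : HasCompactSupport v) (x : En n) :
    Gamma1 n s v v x = Cns n s / 2 * jumpEnergy n s v x := by
  have hvv : ContDiff ℝ 2 fun y => v y * v y := hv.mul hv
  have hint := integrable_smul_secondDiff hn hs0 hs1 hv hvc x
  have hint_sq := integrable_smul_secondDiff hn hs0 hs1 hvv hvc.mul_right x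
  have henergy : 2 * v x * levyIntegral n s v x - levyIntegral n s (fun y => v y * v y) x =
      2 * jumpEnergy n s v x := by
    rw [two_mul_jumpEnergy hn hs0 hs1 (hv.of_le one_le_two) hvc, levyIntegral, levyIntegral,
      ← integral_const_mul, ← integral_sub (hint.const_mul _) hint_sq]
    refine integral_congr_ae (Eventually.of_forall fun h => ?_)
    simp only [secondDiff, smul_eq_mul]
    ring
  rw [Gamma1, Lam_eq_levyIntegral hn hs0 hs1 hv hvc,
    Lam_eq_levyIntegral hn hs0 hs1 hvv hvc.mul_right]
  linear_combination Cns n s / 4 * henergy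

end SingularIntegral

lemma betaS_mul_pns (n : ℕ) {s : ℝ} (hs0 : 0 < s) (hs1 : s < 1) :
    betaS s * (s * pns n s) = Cns n s / 2 := by
  have hΓ : 0 < Real.Gamma (1 - s) := Real.Gamma_pos_of_pos (by linarith)
  have hΓ_neg : |Real.Gamma (-s)| = Real.Gamma (1 - s) / s := by
    have hrec : Real.Gamma (1 - s) = -s * Real.Gamma (-s) := by
      rw [← Real.Gamma_add_one (by linarith), neg_add_eq_sub]
    rw [← abs_of_pos hΓ, hrec, abs_mul, abs_neg, abs_of_pos hs0, mul_div_cancel_left₀ _ hs0.ne']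
  have htwo : (2 : ℝ) ^ (2 * s - 1) = 4 ^ s / 2 := by
    rw [Real.rpow_sub two_pos, Real.rpow_one, Real.rpow_mul two_pos.le]
    norm_num
  rw [betaS, pns, Cns, hΓ_neg, htwo]
  field_simp

lemma betaS_mul_integral_Pconv_energyDensity {n : ℕ} {s : ℝ} {v : En n → ℝ} (hn : 1 ≤ n)
    (hs0 : 0 < s) (hs1 : s < 1) (hv : ContDiff ℝ 2 v) (hvc : HasCompactSupport v) (x : En n) :
    betaS s * ∫ z in Ioi (0 : ℝ), Pconv n s z (energyDensity n s v z) x * z ^ (1 - 2 * s) =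
      Gamma1 n s v v x := by
  rw [(integrableOn_and_integral_Pconv_energyDensity hn hs0 hs1 hv hvc x).2, ← mul_assoc,
    betaS_mul_pns n hs0 hs1, Gamma1_self hn hs0 hs1 hv hvc]

section Bochner

variable {n : ℕ} {s z : ℝ} {u : En n → ℝ}

lemma pd_deriv_CSext (hs : 0 < s) (hz : 0 < z) (hu : ContDiff ℝ 1 u) (huc : HasCompactSupport u)
    (i : Fin n) :
    pd i (fun y => deriv (CSext n s u y) z) = fun y => deriv (CSext n s (pd i u) y) z := by
  have hu' : Continuous (pd i u) := (contDiff_pd (k := 0) hu (by norm_num) i).continuous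
  simp only [deriv_CSext hs hz hu.continuous (isBigO_one_of_hasCompactSupport hu.continuous huc),
    deriv_CSext hs hz hu' (isBigO_one_of_hasCompactSupport hu' (hasCompactSupport_pd huc i)),
    pd_const_mul, pd_fluxConv hz hu huc]

lemma pd_CSext (hz : 0 < z) (hu : ContDiff ℝ 1 u) (huc : HasCompactSupport u) (i : Fin n) :
    pd i (fun y => CSext n s u y z) = fun y => CSext n s (pd i u) y z :=
  pd_Pconv hz hu huc i

lemma sum_energyDensity_pd (hs : 0 < s) (hz : 0 < z) (hu : ContDiff ℝ 1 u)
    (huc : HasCompactSupport u) (y : En n) :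
    ∑ j, energyDensity n s (pd j u) z y =
      (∑ i, ∑ j, (pd i (pd j (fun y' => CSext n s u y' z)) y) ^ 2)
        + ∑ i, (pd i (fun y' => deriv (CSext n s u y') z) y) ^ 2 := by
  simp only [energyDensity, pd_CSext hz hu huc, pd_deriv_CSext hs hz hu huc,
    Finset.sum_add_distrib]
  rw [Finset.sum_comm]

lemma Pconv_sum_energyDensity_pd (hs : 0 < s) (hz : 0 < z) (hu : ContDiff ℝ 2 u)
    (huc : HasCompactSupport u) (x : En n) :
    Pconv n s z (fun y => ∑ j, energyDensity n s (pd j u) z y) x =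
      ∑ j, Pconv n s z (energyDensity n s (pd j u) z) x := by
  simp only [Pconv, Finset.mul_sum]
  exact integral_finsetSum _ fun j _ => integrable_Pker_mul_energyDensity hs hz
    (contDiff_pd_of_two hu j) (hasCompactSupport_pd huc j) x

lemma sum_Gamma1_pd (hn : 1 ≤ n) (hs0 : 0 < s) (hs1 : s < 1) (hu : ContDiff ℝ 3 u)
    (huc : HasCompactSupport u) (x : En n) :
    ∑ j, Gamma1 n s (pd j u) (pd j u) x =
      (1 / 2) * Lam n s (fun y => ∑ i, (pd i u y) ^ 2) x
        - ∑ i, pd i u x * pd i (Lam n s u) x := by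
  have hu' (j : Fin n) : ContDiff ℝ 2 (pd j u) := contDiff_pd hu (by norm_num) j
  simp only [pd_Lam hn hs0 hs1 hu huc, sq]
  rw [Lam_finsetSum _ hn hs0 hs1 (fun j _ => (hu' j).mul (hu' j))
    fun j _ => (hasCompactSupport_pd huc j).mul_right, Finset.mul_sum, ← Finset.sum_sub_distrib]
  refine Finset.sum_congr rfl fun j _ => ?_
  rw [Gamma1]
  ring

theorem fractional_Bochner_B_general (hn : 1 ≤ n) (hs0 : 0 < s) (hs1 : s < 1)
    (hu : ContDiff ℝ 3 u) (huc : HasCompactSupport u) (x : En n) :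
    (1 / 2) * Lam n s (fun y => ∑ i, (pd i u y) ^ 2) x
        - ∑ i, pd i u x * pd i (Lam n s u) x =
      betaS s *
        ∫ z in Ioi (0 : ℝ),
          Pconv n s z
            (fun y =>
              (∑ i, ∑ j, (pd i (pd j (fun y' => CSext n s u y' z)) y) ^ 2)
                + ∑ i, (pd i (fun y' => deriv (CSext n s u y') z) y) ^ 2) x
            * z ^ (1 - 2 * s) := by
  have hu₂ : ContDiff ℝ 2 u := hu.of_le (by norm_num)
  have hu' (j : Fin n) : ContDiff ℝ 2 (pd j u) := contDiff_pd hu (by norm_num) j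
  have huc' (j : Fin n) : HasCompactSupport (pd j u) := hasCompactSupport_pd huc j
  calc (1 / 2) * Lam n s (fun y => ∑ i, (pd i u y) ^ 2) x - ∑ i, pd i u x * pd i (Lam n s u) x
      = ∑ j, Gamma1 n s (pd j u) (pd j u) x := (sum_Gamma1_pd hn hs0 hs1 hu huc x).symm
    _ = betaS s * ∑ j, ∫ z in Ioi (0 : ℝ),
          Pconv n s z (energyDensity n s (pd j u) z) x * z ^ (1 - 2 * s) := by
      simp only [Finset.mul_sum,
        betaS_mul_integral_Pconv_energyDensity hn hs0 hs1 (hu' _) (huc' _) x]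
    _ = betaS s * ∫ z in Ioi (0 : ℝ),
          ∑ j, Pconv n s z (energyDensity n s (pd j u) z) x * z ^ (1 - 2 * s) := by
      rw [integral_finsetSum _ fun j _ =>
        (integrableOn_and_integral_Pconv_energyDensity hn hs0 hs1 (hu' j) (huc' j) x).1]
    _ = _ := by
      congr 1
      refine setIntegral_congr_fun measurableSet_Ioi fun z hz => ?_
      simp only [← sum_energyDensity_pd hs0 hz (hu₂.of_le one_le_two) huc,
        Pconv_sum_energyDensity_pd hs0 hz hu₂ huc, Finset.sum_mul]

end Bochner

/-- **Fractional Bochner's formula, `ℬ`-form** (Euclidean case):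
`½ Λ^s(|∇u|²) - ∇u·∇(Λ^s u) = β_s ∫₀^∞ (P_z^{(s)} ∗ (|∇²_x U|² + |∇_x ∂_z U|²)) z^{1-2s} dz`. -/
theorem fractional_Bochner_B (n : ℕ) (hn : 1 ≤ n) (s : ℝ) (hs0 : 0 < s) (hs1 : s < 1)
    (u : En n → ℝ) (hu : ContDiff ℝ (⊤ : ℕ∞) u) (huc : HasCompactSupport u)
    (hint : ∫⁻ p in (univ : Set (En n)) ×ˢ Ioi (0 : ℝ),
      ENNReal.ofReal
        (p.2 ^ (1 - 2 * s) *
          ((∑ i, ∑ j, (pd i (pd j (fun y => CSext n s u y p.2)) p.1) ^ 2)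
            + ∑ i, (pd i (fun y => deriv (CSext n s u y) p.2) p.1) ^ 2)) < ⊤) :
    ∀ x : En n,
      (1 / 2) * Lam n s (fun y => ∑ i, (pd i u y) ^ 2) x
          - ∑ i, pd i u x * pd i (Lam n s u) x =
        betaS s *
          ∫ z in Ioi (0 : ℝ),
            Pconv n s z
              (fun y =>
                (∑ i, ∑ j, (pd i (pd j (fun y' => CSext n s u y' z)) y) ^ 2)
                  + ∑ i, (pd i (fun y' => deriv (CSext n s u y') z) y) ^ 2) x
              * z ^ (1 - 2 * s) := by
  exact fractional_Bochner_B_general hn hs0 hs1 (mod_cast contDiff_infty.1 hu 3) huc
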